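/- For every η > 0 there exist δ₀ > 0, σ > 0 and μ > 0 such that for all δ ∈ (0, δ₀], all ε, ε̃ ∈ (0, σ·√δ], all h ∈ Z with ‖h − Φ_LSW * Φ_LSW‖_Z ≤ μ, and i ∈ {1,2}: the maps ε ↦ G_i[h; ε, ε̃, δ] and ε̃ ↦ G_i[h; ε, ε̃, δ] are differentiable and their derivatives satisfy ε·|∂G_i/∂ε (h; ε, ε̃, δ)| ≤ η·Ĝ_i[h; δ] and ε̃·|∂G_i/∂ε̃ (h; ε, ε̃, δ)| ≤ η·Ĝ_i[h; δ]. -/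

import Mathlib

/-!
Let `D_δ = 1 / a_δ`. Then `b_δ = 1 + D_δ'`, so the logarithmic part of the exponent of `Γ_i`
integrates exactly (`exp_key`). With `S(ξ) = ∫₀^ξ a_δ` and `T(ξ) = ∫₀^ξ y a_δ(y) dy` this gives
`G_i = ∫ ξ h(ξ) ∫₀^ξ γ_i a_δ(z) exp (S(ξ) - S(z) - ε̃ (T(ξ) - T(z)) - ε (S(ξ) - S(z))) dz dξ`
(`Gfull_eq`), and `Ĝ_i = ∫₀¹ h w` with the weight `w(ξ) = ξ exp (S(ξ)) ∫₀^ξ γ_i a_δ exp (-S)`.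

The weight is increasing on `[0, ∞)`, comparable with `w(1)` on `[3/4, 1]` uniformly in `δ`
(`ww_mid`), and at most a constant times `w(1) ξ ^ 27` beyond `1` (`ww_tail`). Since
`Φ_LSW * Φ_LSW` is nonnegative and bounded below on `[3/4, 13/16]` (`conv_lower`), every `h` in a
small ball satisfies `μ w(1) ≤ Ĝ_i[h]` (`Ghat_lower`) and therefore `∫₀¹ |h| w ≤ 3 Ĝ_i[h]`
(`abs_int_le`).

Differentiating in `ε` or `ε̃` inserts the factor `S(ξ) - S(z)` or `T(ξ) - T(z)` (`deriv_double`).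
Both primitives are at most `40 / √δ` on `[0, 1]` and `40 ξ / √δ` beyond `1`: in the variable
`z ^ (1/3)` the function `D_δ` is a cubic which has a double root for `δ = 0` (`Dd_factor`), so that
`∫₀¹ a_δ` is at most of order `1 / √δ` (`SS_one_sqrt`). The exponentials containing `ε` and
`ε̃` are at most `1`, and the region `ξ > 1` contributes at most `μ w(1) / √δ` times a constant
exponential moment, hence a multiple of `Ĝ_i[h] / √δ` (`deriv_bound`). The derivatives are thus `O(Ĝ_i[h] / √δ)`, and the
factor `ε ≤ σ √δ` or `ε̃ ≤ σ √δ` makes them small relative to `Ĝ_i[h]`.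
-/

open MeasureTheory Set Filter

/-- λ_LSW := 3 (1/2)^(2/3) -/
noncomputable def lamLSW : ℝ := 3 * (1/2 : ℝ) ^ ((2:ℝ)/3)

/-- a_δ(z) := 1/(1 + z − (λ_LSW − δ) z^(1/3)) -/
noncomputable def aF (δ z : ℝ) : ℝ := 1 / (1 + z - (lamLSW - δ) * z ^ ((1:ℝ)/3))

/-- b_δ(z) := 2 − (1/3)(λ_LSW − δ) z^(−2/3) -/
noncomputable def bF (δ z : ℝ) : ℝ := 2 - (1/3) * (lamLSW - δ) * z ^ (-(2:ℝ)/3)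

/-- ‖Φ‖_sup := sup_{0≤z≤1} |Φ(z)| -/
noncomputable def normSup (Φ : ℝ → ℝ) : ℝ := sSup ((fun z => |Φ z|) '' Icc (0:ℝ) 1)

/-- ‖Φ‖_tail := sup_{z≥1} |Φ(z)| e^{β₁ z} z^{β₂} -/
noncomputable def normTail (β₁ β₂ : ℝ) (Φ : ℝ → ℝ) : ℝ :=
  sSup ((fun z => |Φ z| * Real.exp (β₁ * z) * z ^ β₂) '' Ici (1:ℝ))

/-- ‖Φ‖_Z := ‖Φ‖_sup + ‖Φ‖_tail -/
noncomputable def normZ (β₁ β₂ : ℝ) (Φ : ℝ → ℝ) : ℝ := normSup Φ + normTail β₁ β₂ Φ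

/-- membership in the space Z: measurable with finite norm -/
def memZ (β₁ β₂ : ℝ) (Φ : ℝ → ℝ) : Prop :=
  Measurable Φ ∧ BddAbove ((fun z => |Φ z|) '' Icc (0:ℝ) 1) ∧
    BddAbove ((fun z => |Φ z| * Real.exp (β₁ * z) * z ^ β₂) '' Ici (1:ℝ))

/-- (Φ₁ * Φ₂)(z) := (1/2) ∫₀^z Φ₁(z−y) Φ₂(y) dy -/
noncomputable def conv (Φ₁ Φ₂ : ℝ → ℝ) (z : ℝ) : ℝ :=
  (1/2) * ∫ y in (0:ℝ)..z, Φ₁ (z - y) * Φ₂ y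

/-- unnormalized solution of the homogeneous ODE -/
noncomputable def psi0 (δ ε εt z : ℝ) : ℝ :=
  Real.exp (-∫ y in (0:ℝ)..z, aF δ y * (bF δ y - εt * y - ε))

/-- ψ(z; ε, ε̃, δ), normalized so that ∫₀¹ z ψ dz = 1 -/
noncomputable def psi (δ ε εt z : ℝ) : ℝ :=
  psi0 δ ε εt z / ∫ t in (0:ℝ)..1, t * psi0 δ ε εt t

/-- the smooth LSW self-similar profile -/
noncomputable def PhiLSW (z : ℝ) : ℝ :=
  if z ≤ 1/2 then
    Real.exp (-∫ y in (0:ℝ)..z, aF 0 y * bF 0 y) /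
      ∫ t in (0:ℝ)..(1/2 : ℝ), t * Real.exp (-∫ y in (0:ℝ)..t, aF 0 y * bF 0 y)
  else 0

/-- ρ_δ(ξ) := ξ a_δ(ξ) exp(−∫_ξ^1 a_δ b_δ) -/
noncomputable def rhoF (δ ξ : ℝ) : ℝ :=
  ξ * aF δ ξ * Real.exp (-∫ y in ξ..(1:ℝ), aF δ y * bF δ y)

/-- R_δ[h] := ∫₀¹ ρ_δ(ξ) h(ξ) dξ -/
noncomputable def Rdel (δ : ℝ) (h : ℝ → ℝ) : ℝ := ∫ ξ in (0:ℝ)..1, rhoF δ ξ * h ξ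

/-- R₀[h] := ∫_{1/2}^1 ξ a₀(ξ) h(ξ) exp(−∫_ξ^1 a₀ b₀) dξ -/
noncomputable def Rzero (h : ℝ → ℝ) : ℝ :=
  ∫ ξ in (1/2 : ℝ)..1, ξ * aF 0 ξ * h ξ * Real.exp (-∫ y in ξ..(1:ℝ), aF 0 y * bF 0 y)

/-- γ₁(z) = z, γ₂(z) = 1 -/
noncomputable def gamF (i : ℕ) (z : ℝ) : ℝ := if i = 1 then z else 1

/-- Γ_i(ξ; ε, ε̃, δ) -/
noncomputable def Gam (i : ℕ) (δ ε εt ξ : ℝ) : ℝ :=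
  ∫ z in (0:ℝ)..ξ, gamF i z * Real.exp (∫ y in z..ξ, aF δ y * (bF δ y - εt * y - ε))

/-- Γ̂_i(ξ; δ) := Γ_i(ξ; 0, 0, δ) -/
noncomputable def GamHat (i : ℕ) (δ ξ : ℝ) : ℝ := Gam i δ 0 0 ξ

/-- K_i^δ := Γ̂_i(1; δ) -/
noncomputable def Kc (i : ℕ) (δ : ℝ) : ℝ := GamHat i δ 1

/-- Ĝ_i[h; δ] := ∫₀¹ ξ a_δ(ξ) h(ξ) Γ̂_i(ξ; δ) dξ -/
noncomputable def Ghat (i : ℕ) (δ : ℝ) (h : ℝ → ℝ) : ℝ :=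
  ∫ ξ in (0:ℝ)..1, ξ * aF δ ξ * h ξ * GamHat i δ ξ

/-- G_i[h; ε, ε̃, δ] := ∫₀^∞ ξ a_δ(ξ) h(ξ) Γ_i(ξ; ε, ε̃, δ) dξ -/
noncomputable def Gfull (i : ℕ) (δ ε εt : ℝ) (h : ℝ → ℝ) : ℝ :=
  ∫ ξ in Ioi (0:ℝ), ξ * aF δ ξ * h ξ * Gam i δ ε εt ξ

/-! ### The cubic structure of the denominator -/

/-- The denominator `1 / a_δ`. -/
noncomputable def Dd (δ z : ℝ) : ℝ := 1 + z - (lamLSW - δ) * z ^ ((1:ℝ)/3)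

lemma aF_eq (δ z : ℝ) : aF δ z = 1 / Dd δ z := rfl

lemma Dd_cont (δ : ℝ) : Continuous (Dd δ) := by
  have : Continuous fun z : ℝ => z ^ ((1:ℝ)/3) := Real.continuous_rpow_const (by norm_num)
  unfold Dd; fun_prop

/-- With `z = t ^ 3`, the denominator is a cubic having a double root at `t₀ = 2 ^ (-1/3)`
for `δ = 0`; this is what makes `λ_LSW` critical. -/
lemma Dd_factor : ∃ t₀ : ℝ, 79/100 < t₀ ∧ t₀ < 4/5 ∧ t₀ ^ 3 = 1/2 ∧ lamLSW = 3 * t₀ ^ 2 ∧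
    ∀ δ z : ℝ, 0 ≤ z → ∃ t : ℝ, 0 ≤ t ∧ t ^ 3 = z ∧ z ^ ((1:ℝ)/3) = t ∧
      Dd δ z = (t - t₀) ^ 2 * (t + 2 * t₀) + δ * t := by
  have h3 : ((1/2 : ℝ) ^ ((1:ℝ)/3)) ^ 3 = 1/2 := by
    rw [← Real.rpow_natCast, ← Real.rpow_mul (by norm_num)]; norm_num
  have h2 : lamLSW = 3 * ((1/2 : ℝ) ^ ((1:ℝ)/3)) ^ 2 := by
    rw [← Real.rpow_natCast, ← Real.rpow_mul (by norm_num), lamLSW]; norm_num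
  have h0 : (0:ℝ) ≤ (1/2 : ℝ) ^ ((1:ℝ)/3) := by positivity
  generalize (1/2 : ℝ) ^ ((1:ℝ)/3) = t₀ at *
  refine ⟨t₀, ?_, ?_, h3, h2, fun δ z hz => ?_⟩
  · by_contra! hc
    have := pow_le_pow_left₀ h0 hc 3
    norm_num [h3] at this
  · by_contra! hc
    have := pow_le_pow_left₀ (by norm_num) hc 3
    norm_num [h3] at this
  · have ht3 : (z ^ ((1:ℝ)/3)) ^ 3 = z := by
      rw [← Real.rpow_natCast, ← Real.rpow_mul hz]; norm_num
    refine ⟨z ^ ((1:ℝ)/3), by positivity, ht3, rfl, ?_⟩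
    rw [Dd, h2]
    generalize z ^ ((1:ℝ)/3) = t at *
    rw [← ht3]
    linear_combination (-2) * h3

lemma one_lt_lam : 1 < lamLSW := by
  obtain ⟨t₀, h1, h2, h3, h4, -⟩ := Dd_factor
  rw [h4]; nlinarith

lemma Dd_le {δ z : ℝ} (hδ : δ ≤ 1) (hz : 0 ≤ z) : Dd δ z ≤ 1 + z := by
  have := one_lt_lam
  have h : 0 ≤ (lamLSW - δ) * z ^ ((1:ℝ)/3) := mul_nonneg (by linarith) (by positivity)
  rw [Dd]; linarith

lemma Dd_ge {δ z : ℝ} (hδ : 0 ≤ δ) (hδ1 : δ ≤ 1) (hz : 0 ≤ z) (hz1 : z ≤ 1) :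
    ((z - 1/2) ^ 2 + δ) / 10 ≤ Dd δ z := by
  obtain ⟨t₀, h1, h2, h3, -, h⟩ := Dd_factor
  obtain ⟨t, ht, htz, -, hD⟩ := h δ z hz
  have ht1 : t ≤ 1 := by
    by_contra! hc
    have := one_lt_pow₀ hc (n := 3) (by norm_num)
    linarith
  rw [hD]
  rcases le_total (1/2) t with h5 | h5
  · have e : (z - 1/2) ^ 2 = (t - t₀) ^ 2 * (t ^ 2 + t * t₀ + t₀ ^ 2) ^ 2 := by
      rw [← htz, ← h3]; ring
    have h6 : (t ^ 2 + t * t₀ + t₀ ^ 2) ^ 2 ≤ 9 := by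
      have : t ^ 2 + t * t₀ + t₀ ^ 2 ≤ 3 := by nlinarith
      have : 0 ≤ t ^ 2 + t * t₀ + t₀ ^ 2 := by positivity
      nlinarith
    have h7 : (t - t₀) ^ 2 * (t ^ 2 + t * t₀ + t₀ ^ 2) ^ 2 ≤ (t - t₀) ^ 2 * 9 :=
      mul_le_mul_of_nonneg_left h6 (sq_nonneg _)
    have h8 : (t - t₀) ^ 2 * (3/2) ≤ (t - t₀) ^ 2 * (t + 2 * t₀) :=
      mul_le_mul_of_nonneg_left (by linarith) (sq_nonneg _)
    nlinarith [sq_nonneg (t - t₀)]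
  · have h6 : (29/100 : ℝ) ^ 2 ≤ (t - t₀) ^ 2 := by nlinarith
    have h8 : (29/100 : ℝ) ^ 2 * (158/100) ≤ (t - t₀) ^ 2 * (t + 2 * t₀) :=
      mul_le_mul h6 (by linarith) (by norm_num) (sq_nonneg _)
    nlinarith [mul_nonneg hδ ht]

lemma Dd_ge_tail {δ z : ℝ} (hδ : 0 ≤ δ) (hz1 : 1 ≤ z) : z / 25 ≤ Dd δ z := by
  obtain ⟨t₀, h1, h2, h3, -, h⟩ := Dd_factor
  obtain ⟨t, ht, htz, -, hD⟩ := h δ z (by linarith)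
  have ht1 : 1 ≤ t := by
    by_contra! hc
    have := pow_lt_one₀ ht hc (n := 3) (by norm_num)
    linarith
  rw [hD, ← htz]
  have h5 : t / 5 ≤ t - t₀ := by linarith
  have h6 : (t / 5) ^ 2 ≤ (t - t₀) ^ 2 := pow_le_pow_left₀ (by linarith) h5 2
  have h7 : (t / 5) ^ 2 * t ≤ (t - t₀) ^ 2 * (t + 2 * t₀) :=
    mul_le_mul h6 (by linarith) ht (sq_nonneg _)
  nlinarith [mul_nonneg hδ ht]

lemma Dd_pos {δ z : ℝ} (hδ : 0 < δ) (hδ1 : δ ≤ 1) (hz : 0 ≤ z) : 0 < Dd δ z := by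
  rcases le_total z 1 with h | h
  · exact lt_of_lt_of_le (by positivity) (Dd_ge hδ.le hδ1 hz h)
  · exact lt_of_lt_of_le (by positivity) (Dd_ge_tail hδ.le h)

/-- Since `b_δ = 1 + D_δ'`, where `D_δ = 1 / a_δ`, the logarithmic part of the exponent
integrates exactly. -/
lemma exp_key {δ ε εt z ξ : ℝ} (hz : 0 ≤ z) (hzξ : z ≤ ξ) (hpos : ∀ y ∈ Icc z ξ, 0 < Dd δ y) :
    Real.exp (∫ y in z..ξ, aF δ y * (bF δ y - εt * y - ε)) =
      Dd δ ξ / Dd δ z * Real.exp (∫ y in z..ξ, aF δ y * (1 - εt * y - ε)) := by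
  have hac : ContinuousOn (aF δ) (uIcc z ξ) := by
    rw [uIcc_of_le hzξ]
    exact continuousOn_const.div (Dd_cont δ).continuousOn fun y hy => (hpos y hy).ne'
  have hr : IntervalIntegrable (fun y : ℝ => y ^ (-(2:ℝ)/3)) volume z ξ :=
    intervalIntegral.intervalIntegrable_rpow' (by norm_num)
  have hi1 : IntervalIntegrable
      (fun y => aF δ y * (1 - (1/3) * (lamLSW - δ) * y ^ (-(2:ℝ)/3))) volume z ξ :=
    ((continuous_const.intervalIntegrable _ _).sub (hr.const_mul _)).continuousOn_mul hac
  have hi2 : IntervalIntegrable (fun y => aF δ y * (1 - εt * y - ε)) volume z ξ :=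
    (hac.mul (by fun_prop)).intervalIntegrable
  have e1 : (∫ y in z..ξ, aF δ y * (bF δ y - εt * y - ε)) =
      (∫ y in z..ξ, aF δ y * (1 - (1/3) * (lamLSW - δ) * y ^ (-(2:ℝ)/3))) +
        ∫ y in z..ξ, aF δ y * (1 - εt * y - ε) := by
    rw [← intervalIntegral.integral_add hi1 hi2]
    congr 1; ext y; rw [bF]; ring
  have e2 : (∫ y in z..ξ, aF δ y * (1 - (1/3) * (lamLSW - δ) * y ^ (-(2:ℝ)/3))) =
      Real.log (Dd δ ξ) - Real.log (Dd δ z) := by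
    refine intervalIntegral.integral_eq_sub_of_hasDerivAt_of_le (f := fun y => Real.log (Dd δ y))
      hzξ ?_ ?_ hi1
    · exact (Dd_cont δ).continuousOn.log fun y hy => (hpos y hy).ne'
    · intro y hy
      have hy0 : y ≠ 0 := (lt_of_le_of_lt hz hy.1).ne'
      have h1 : HasDerivAt (Dd δ) (1 - (lamLSW - δ) * ((1/3) * y ^ ((1:ℝ)/3 - 1))) y :=
        ((hasDerivAt_id y).const_add 1).sub
          ((Real.hasDerivAt_rpow_const (Or.inl hy0)).const_mul _)
      refine (h1.log (hpos y ⟨hy.1.le, hy.2.le⟩).ne').congr_deriv ?_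
      rw [aF_eq, show (1:ℝ)/3 - 1 = -(2:ℝ)/3 by norm_num]; ring
  rw [e1, e2, Real.exp_add, Real.exp_sub,
    Real.exp_log (hpos ξ ⟨hzξ, le_rfl⟩), Real.exp_log (hpos z ⟨le_rfl, hzξ⟩)]

/-! ### The monotone weight -/

/-- The coefficient `a_δ`, extended evenly so that it is continuous on the whole line. -/
noncomputable def AA (δ y : ℝ) : ℝ := aF δ |y|

/-- The primitive of `a_δ`. -/
noncomputable def SS (δ ξ : ℝ) : ℝ := ∫ y in (0:ℝ)..ξ, AA δ y

/-- The primitive of `y a_δ(y)`, extended as an odd function. -/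
noncomputable def TT (δ ξ : ℝ) : ℝ := ∫ y in (0:ℝ)..ξ, |y| * AA δ y

/-- The weight `ξ a_δ(ξ) Γ̂_i(ξ; δ)` of `Ĝ_i`, in the form in which the derivative of `1 / a_δ`
has been integrated out; the two agree for `ξ ≥ 0`. -/
noncomputable def ww (i : ℕ) (δ ξ : ℝ) : ℝ :=
  ξ * ∫ z in (0:ℝ)..ξ, gamF i z * AA δ z * Real.exp (SS δ ξ - SS δ z)

/-- The weight divided by `ξ exp (∫₀^ξ a_δ)`; it is still increasing on `[0, ∞)`. -/
noncomputable def HH (i : ℕ) (δ ξ : ℝ) : ℝ :=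
  ∫ z in (0:ℝ)..ξ, gamF i z * AA δ z * Real.exp (-SS δ z)

lemma gamF_cont (i : ℕ) : Continuous (gamF i) := by
  unfold gamF; split_ifs <;> fun_prop

lemma gamF_nonneg (i : ℕ) {z : ℝ} (hz : 0 ≤ z) : 0 ≤ gamF i z := by
  unfold gamF; split_ifs <;> linarith

lemma gamF_le_max (i : ℕ) (z : ℝ) : gamF i z ≤ max z 1 := by
  unfold gamF; split_ifs <;> simp

lemma le_gamF (i : ℕ) {z : ℝ} (hz : z ≤ 1) : z ≤ gamF i z := by
  unfold gamF; split_ifs <;> linarith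

lemma ww_eq (i : ℕ) (δ ξ : ℝ) : ww i δ ξ = ξ * (Real.exp (SS δ ξ) * HH i δ ξ) := by
  rw [ww, HH, ← intervalIntegral.integral_const_mul (Real.exp _)]
  refine congrArg (ξ * ·) (intervalIntegral.integral_congr fun z _ => ?_)
  rw [sub_eq_add_neg, Real.exp_add]; ring

lemma SS_zero (δ : ℝ) : SS δ 0 = 0 := by simp [SS]
lemma TT_zero (δ : ℝ) : TT δ 0 = 0 := by simp [TT]

lemma int_le_const {f : ℝ → ℝ} (hf : Continuous f) {a b C : ℝ} (hab : a ≤ b)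
    (h : ∀ x ∈ Icc a b, f x ≤ C) : ∫ x in a..b, f x ≤ C * (b - a) := by
  calc ∫ x in a..b, f x ≤ ∫ x in a..b, C :=
        intervalIntegral.integral_mono_on hab (hf.intervalIntegrable _ _)
          intervalIntegrable_const h
    _ = C * (b - a) := by simp [mul_comm]

lemma AA_pos {δ : ℝ} (hδ : 0 < δ) (hδ1 : δ ≤ 1) (y : ℝ) : 0 < AA δ y := by
  rw [AA, aF_eq]; exact one_div_pos.2 (Dd_pos hδ hδ1 (abs_nonneg y))

lemma AA_cont {δ : ℝ} (hδ : 0 < δ) (hδ1 : δ ≤ 1) : Continuous (AA δ) := by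
  unfold AA aF
  exact continuous_const.div ((Dd_cont δ).comp continuous_abs)
    fun y => (Dd_pos hδ hδ1 (abs_nonneg y)).ne'

lemma AA_ge {δ : ℝ} (hδ : 0 < δ) (hδ1 : δ ≤ 1) {y : ℝ} (hy : 0 ≤ y) : 1 / (1 + y) ≤ AA δ y := by
  rw [AA, aF_eq, abs_of_nonneg hy]
  exact one_div_le_one_div_of_le (Dd_pos hδ hδ1 hy) (Dd_le hδ1 hy)

lemma AA_le_tail {δ : ℝ} (hδ : 0 < δ) {y : ℝ} (hy : 1 ≤ y) : AA δ y ≤ 25 / y := by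
  rw [AA, aF_eq, abs_of_nonneg (by linarith)]
  calc 1 / Dd δ y ≤ 1 / (y / 25) :=
        one_div_le_one_div_of_le (by positivity) (Dd_ge_tail hδ.le hy)
    _ = 25 / y := by rw [one_div_div]

lemma AA_le_unit {δ : ℝ} (hδ : 0 < δ) (hδ1 : δ ≤ 1)
    {y : ℝ} (hy : 0 ≤ y) (hy1 : y ≤ 1) : AA δ y ≤ 10 / ((y - 1/2) ^ 2 + δ) := by
  rw [AA, aF_eq, abs_of_nonneg hy]
  calc 1 / Dd δ y ≤ 1 / (((y - 1/2) ^ 2 + δ) / 10) :=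
        one_div_le_one_div_of_le (by positivity) (Dd_ge hδ.le hδ1 hy hy1)
    _ = _ := by rw [one_div_div]

lemma AA_le_away {δ : ℝ} (hδ : 0 < δ) (hδ1 : δ ≤ 1)
    {y : ℝ} (hy : 0 ≤ y) (hy1 : y ≤ 1) (h : 1/16 ≤ (y - 1/2) ^ 2) :
    AA δ y ≤ 160 := by
  refine (AA_le_unit hδ hδ1 hy hy1).trans ?_
  rw [div_le_iff₀ (by positivity)]; linarith

lemma SS_sub {δ : ℝ} (hδ : 0 < δ) (hδ1 : δ ≤ 1)
    (z ξ : ℝ) : SS δ ξ - SS δ z = ∫ y in z..ξ, AA δ y := by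
  have := (AA_cont hδ hδ1).intervalIntegrable (μ := volume)
  exact intervalIntegral.integral_interval_sub_left (this _ _) (this _ _)

lemma yAA_cont {δ : ℝ} (hδ : 0 < δ) (hδ1 : δ ≤ 1)
    : Continuous (fun y => |y| * AA δ y) := continuous_abs.mul (AA_cont hδ hδ1)

lemma TT_sub {δ : ℝ} (hδ : 0 < δ) (hδ1 : δ ≤ 1)
    (z ξ : ℝ) : TT δ ξ - TT δ z = ∫ y in z..ξ, |y| * AA δ y := by
  have := (yAA_cont hδ hδ1).intervalIntegrable (μ := volume)
  exact intervalIntegral.integral_interval_sub_left (this _ _) (this _ _)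

lemma SS_mono {δ : ℝ} (hδ : 0 < δ) (hδ1 : δ ≤ 1) : Monotone (SS δ) := fun z ξ h => by
  rw [← sub_nonneg, SS_sub hδ hδ1]
  exact intervalIntegral.integral_nonneg h fun y _ => (AA_pos hδ hδ1 y).le

lemma TT_mono {δ : ℝ} (hδ : 0 < δ) (hδ1 : δ ≤ 1) : Monotone (TT δ) := fun z ξ h => by
  rw [← sub_nonneg, TT_sub hδ hδ1]
  exact intervalIntegral.integral_nonneg h
    fun y _ => mul_nonneg (abs_nonneg y) (AA_pos hδ hδ1 y).le

lemma SS_cont {δ : ℝ} (hδ : 0 < δ) (hδ1 : δ ≤ 1) : Continuous (SS δ) :=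
  intervalIntegral.continuous_primitive (fun _ _ => (AA_cont hδ hδ1).intervalIntegrable _ _) 0

lemma TT_cont {δ : ℝ} (hδ : 0 < δ) (hδ1 : δ ≤ 1) : Continuous (TT δ) :=
  intervalIntegral.continuous_primitive (fun _ _ => (yAA_cont hδ hδ1).intervalIntegrable _ _) 0

lemma SS_nonneg {δ : ℝ} (hδ : 0 < δ) (hδ1 : δ ≤ 1) {ξ : ℝ} (h : 0 ≤ ξ) : 0 ≤ SS δ ξ := by
  rw [← SS_zero δ]; exact SS_mono hδ hδ1 h

lemma TT_nonneg {δ : ℝ} (hδ : 0 < δ) (hδ1 : δ ≤ 1) {ξ : ℝ} (h : 0 ≤ ξ) : 0 ≤ TT δ ξ := by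
  rw [← TT_zero δ]; exact TT_mono hδ hδ1 h

lemma hh_cont {δ : ℝ} (hδ : 0 < δ) (hδ1 : δ ≤ 1)
    (i : ℕ) : Continuous fun z => gamF i z * AA δ z * Real.exp (-SS δ z) :=
  ((gamF_cont i).mul (AA_cont hδ hδ1)).mul (Real.continuous_exp.comp (SS_cont hδ hδ1).neg)

lemma hh_nonneg {δ : ℝ} (hδ : 0 < δ) (hδ1 : δ ≤ 1) (i : ℕ) {z : ℝ} (hz : 0 ≤ z) :
    0 ≤ gamF i z * AA δ z * Real.exp (-SS δ z) :=
  mul_nonneg (mul_nonneg (gamF_nonneg i hz) (AA_pos hδ hδ1 z).le) (Real.exp_nonneg _)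

lemma HH_sub {δ : ℝ} (hδ : 0 < δ) (hδ1 : δ ≤ 1) (i : ℕ) (z ξ : ℝ) : HH i δ ξ - HH i δ z =
    ∫ y in z..ξ, gamF i y * AA δ y * Real.exp (-SS δ y) := by
  have := (hh_cont hδ hδ1 i).intervalIntegrable (μ := volume)
  exact intervalIntegral.integral_interval_sub_left (this _ _) (this _ _)

lemma HH_mono {δ : ℝ} (hδ : 0 < δ) (hδ1 : δ ≤ 1)
    (i : ℕ) {z ξ : ℝ} (hz : 0 ≤ z) (h : z ≤ ξ) : HH i δ z ≤ HH i δ ξ := by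
  rw [← sub_nonneg, HH_sub hδ hδ1]
  exact intervalIntegral.integral_nonneg h fun y hy => hh_nonneg hδ hδ1 i (hz.trans hy.1)

lemma HH_cont {δ : ℝ} (hδ : 0 < δ) (hδ1 : δ ≤ 1) (i : ℕ) : Continuous (HH i δ) :=
  intervalIntegral.continuous_primitive (fun _ _ => (hh_cont hδ hδ1 i).intervalIntegrable _ _) 0

lemma ww_cont {δ : ℝ} (hδ : 0 < δ) (hδ1 : δ ≤ 1) (i : ℕ) : Continuous (ww i δ) := by
  have : ww i δ = fun ξ => ξ * (Real.exp (SS δ ξ) * HH i δ ξ) := funext (ww_eq i δ)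
  rw [this]
  exact continuous_id.mul ((Real.continuous_exp.comp (SS_cont hδ hδ1)).mul (HH_cont hδ hδ1 i))

lemma HH_nonneg {δ : ℝ} (hδ : 0 < δ) (hδ1 : δ ≤ 1)
    (i : ℕ) {ξ : ℝ} (h : 0 ≤ ξ) : 0 ≤ HH i δ ξ := by
  have : HH i δ 0 = 0 := by simp [HH]
  rw [← this]; exact HH_mono hδ hδ1 i le_rfl h

lemma ww_mono {δ : ℝ} (hδ : 0 < δ) (hδ1 : δ ≤ 1)
    (i : ℕ) {z ξ : ℝ} (hz : 0 ≤ z) (h : z ≤ ξ) : ww i δ z ≤ ww i δ ξ := by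
  rw [ww_eq, ww_eq]
  have h1 := HH_mono hδ hδ1 i hz h
  have h2 := Real.exp_le_exp.2 (SS_mono hδ hδ1 h)
  have h3 := HH_nonneg hδ hδ1 i hz
  have h4 := hz.trans h
  gcongr

lemma ww_nonneg {δ : ℝ} (hδ : 0 < δ) (hδ1 : δ ≤ 1)
    (i : ℕ) {ξ : ℝ} (h : 0 ≤ ξ) : 0 ≤ ww i δ ξ := by
  rw [ww_eq]; have := HH_nonneg hδ hδ1 i h; positivity

lemma HH_quarter {δ : ℝ} (hδ : 0 < δ) (hδ1 : δ ≤ 1)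
    (i : ℕ) : Real.exp (-40) / 64 ≤ HH i δ (1/4) := by
  have h40 : SS δ (1/4) ≤ 40 := by
    have := int_le_const (AA_cont hδ hδ1) (a := 0) (b := 1/4) (C := 160) (by norm_num)
      fun y hy => AA_le_away hδ hδ1 hy.1 (by linarith [hy.2]) (by nlinarith [hy.1, hy.2])
    rw [SS]; linarith
  have e : (∫ z in (0:ℝ)..(1/4), z * (1/2 * Real.exp (-40))) = Real.exp (-40) / 64 := by
    rw [intervalIntegral.integral_mul_const, integral_id]; ring
  rw [← e, HH]
  refine intervalIntegral.integral_mono_on (by norm_num)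
    (Continuous.intervalIntegrable (by fun_prop) _ _)
    ((hh_cont hδ hδ1 i).intervalIntegrable _ _) fun z hz => ?_
  have h1 : z ≤ gamF i z := le_gamF i (by linarith [hz.2])
  have h2 : 1/2 ≤ AA δ z := (one_div_le_one_div_of_le (by linarith [hz.1])
    (by linarith [hz.2])).trans (AA_ge hδ hδ1 hz.1)
  have h3 : Real.exp (-40) ≤ Real.exp (-SS δ z) :=
    Real.exp_le_exp.2 (by linarith [SS_mono hδ hδ1 hz.2])
  rw [mul_assoc]
  have := hz.1
  have := gamF_nonneg i hz.1
  gcongr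

lemma exp_neg_SS_le {δ : ℝ} (hδ : 0 < δ) (hδ1 : δ ≤ 1)
    {z : ℝ} (hz : 0 ≤ z) : Real.exp (-SS δ z) ≤ 1 :=
  Real.exp_le_one_iff.2 (by linarith [SS_nonneg hδ hδ1 hz])

lemma HH_one {δ : ℝ} (hδ : 0 < δ) (hδ1 : δ ≤ 1) (i : ℕ) : HH i δ 1 ≤ HH i δ (3/4) + 40 := by
  have := int_le_const (hh_cont hδ hδ1 i) (a := 3/4) (b := 1) (C := 160) (by norm_num)
    fun y hy => by
      have h0 : (0:ℝ) ≤ y := by linarith [hy.1]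
      have h1 : gamF i y ≤ 1 := (gamF_le_max i y).trans (max_le hy.2 le_rfl)
      have h2 := AA_le_away hδ hδ1 h0 hy.2 (by nlinarith [hy.1, hy.2])
      have h3 := exp_neg_SS_le hδ hδ1 h0
      have h4 := (AA_pos hδ hδ1 y).le
      calc gamF i y * AA δ y * Real.exp (-SS δ y) ≤ 1 * 160 * 1 := by
            gcongr
        _ = 160 := by norm_num
  rw [← HH_sub hδ hδ1] at this; linarith

lemma HH_tail {δ : ℝ} (hδ : 0 < δ) (hδ1 : δ ≤ 1)
    (i : ℕ) {ξ : ℝ} (hξ : 1 ≤ ξ) : HH i δ ξ ≤ HH i δ 1 + 25 * (ξ - 1) := by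
  have := int_le_const (hh_cont hδ hδ1 i) (a := 1) (b := ξ) (C := 25) hξ
    fun y hy => by
      have h0 : (0:ℝ) < y := by linarith [hy.1]
      have h1 : gamF i y ≤ y := (gamF_le_max i y).trans (max_le le_rfl hy.1)
      have h2 := AA_le_tail hδ hy.1
      have h3 := exp_neg_SS_le hδ hδ1 h0.le
      have h4 := (AA_pos hδ hδ1 y).le
      calc gamF i y * AA δ y * Real.exp (-SS δ y) ≤ y * (25 / y) * 1 := by
            gcongr
        _ = 25 := by field_simp
  rw [← HH_sub hδ hδ1] at this; linarith

lemma SS_one_le {δ : ℝ} (hδ : 0 < δ) (hδ1 : δ ≤ 1) : SS δ 1 ≤ SS δ (3/4) + 40 := by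
  have := int_le_const (AA_cont hδ hδ1) (a := 3/4) (b := 1) (C := 160) (by norm_num)
    fun y hy => AA_le_away hδ hδ1 (by linarith [hy.1]) hy.2 (by nlinarith [hy.1, hy.2])
  rw [← SS_sub hδ hδ1] at this; linarith

lemma SS_tail_log {δ : ℝ} (hδ : 0 < δ) (hδ1 : δ ≤ 1)
    {ξ : ℝ} (hξ : 1 ≤ ξ) : Real.exp (SS δ ξ) ≤ ξ ^ 25 * Real.exp (SS δ 1) := by
  have h : SS δ ξ - SS δ 1 ≤ 25 * Real.log ξ := by
    rw [SS_sub hδ hδ1]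
    have h0 : (0:ℝ) ∉ uIcc 1 ξ := by rw [uIcc_of_le hξ]; intro h; linarith [h.1]
    calc ∫ y in (1:ℝ)..ξ, AA δ y ≤ ∫ y in (1:ℝ)..ξ, 25 * (1 / y) := by
          refine intervalIntegral.integral_mono_on hξ ((AA_cont hδ hδ1).intervalIntegrable _ _)
            ((intervalIntegral.intervalIntegrable_one_div (fun y hy => ?_)
              continuousOn_id).const_mul _) fun y hy => ?_
          · exact fun h' => h0 (h' ▸ hy)
          · exact (AA_le_tail hδ hy.1).trans_eq (by ring)
      _ = 25 * Real.log ξ := by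
          rw [intervalIntegral.integral_const_mul, integral_one_div h0]; simp
  calc Real.exp (SS δ ξ) ≤ Real.exp (25 * Real.log ξ + SS δ 1) :=
        Real.exp_le_exp.2 (by linarith)
    _ = ξ ^ 25 * Real.exp (SS δ 1) := by
        rw [Real.exp_add, show (25:ℝ) * Real.log ξ = ((25:ℕ):ℝ) * Real.log ξ by norm_num,
          Real.exp_nat_mul, Real.exp_log (by linarith)]

/-- The double root of the denominator makes `∫₀¹ a_δ` at most of order `1 / √δ`. -/
lemma SS_one_sqrt {δ : ℝ} (hδ : 0 < δ) (hδ1 : δ ≤ 1) : SS δ 1 ≤ 40 / Real.sqrt δ := by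
  set s := Real.sqrt δ with hs
  have hs0 : 0 < s := Real.sqrt_pos.2 hδ
  have hs2 : s ^ 2 = δ := Real.sq_sqrt hδ.le
  have hc : Continuous fun y : ℝ => 10 / ((y - 1/2) ^ 2 + δ) :=
    continuous_const.div (by fun_prop) fun y => by positivity
  have h1 : SS δ 1 ≤ ∫ y in (0:ℝ)..1, 10 / ((y - 1/2) ^ 2 + δ) :=
    intervalIntegral.integral_mono_on zero_le_one ((AA_cont hδ hδ1).intervalIntegrable _ _)
      (hc.intervalIntegrable _ _) fun y hy => AA_le_unit hδ hδ1 hy.1 hy.2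
  have h2 : (∫ y in (0:ℝ)..1, 10 / ((y - 1/2) ^ 2 + δ)) =
      10 / s * Real.arctan ((1 - 1/2) / s) - 10 / s * Real.arctan ((0 - 1/2) / s) := by
    refine intervalIntegral.integral_eq_sub_of_hasDerivAt
      (f := fun y => 10 / s * Real.arctan ((y - 1/2) / s)) (fun y _ => ?_)
      (hc.intervalIntegrable _ _)
    refine (((((hasDerivAt_id y).sub_const (1/2)).div_const s).arctan).const_mul
      (10 / s)).congr_deriv ?_
    rw [← hs2]; simp only [id]; field_simp; ring
  have h3 := Real.arctan_lt_pi_div_two ((1 - 1/2) / s)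
  have h4 := Real.neg_pi_div_two_lt_arctan ((0 - 1/2) / s)
  have h5 := Real.pi_lt_four
  calc SS δ 1 ≤ 10 / s * (Real.arctan ((1 - 1/2) / s) - Real.arctan ((0 - 1/2) / s)) := by
        rw [mul_sub, ← h2]; exact h1
    _ ≤ 10 / s * 4 := by gcongr; linarith
    _ = 40 / s := by ring

lemma SS_tail {δ : ℝ} (hδ : 0 < δ) (hδ1 : δ ≤ 1)
    {ξ : ℝ} (hξ : 1 ≤ ξ) : SS δ ξ ≤ SS δ 1 + 25 * (ξ - 1) := by
  have := int_le_const (AA_cont hδ hδ1) (a := 1) (b := ξ) (C := 25) hξ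
    fun y hy => (AA_le_tail hδ hy.1).trans (div_le_self (by norm_num) hy.1)
  rw [← SS_sub hδ hδ1] at this; linarith

lemma TT_one {δ : ℝ} (hδ : 0 < δ) (hδ1 : δ ≤ 1) : TT δ 1 ≤ SS δ 1 := by
  refine intervalIntegral.integral_mono_on zero_le_one
    ((yAA_cont hδ hδ1).intervalIntegrable _ _) ((AA_cont hδ hδ1).intervalIntegrable _ _)
    fun y hy => ?_
  rw [abs_of_nonneg hy.1]
  exact mul_le_of_le_one_left (AA_pos hδ hδ1 y).le hy.2

lemma TT_tail {δ : ℝ} (hδ : 0 < δ) (hδ1 : δ ≤ 1)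
    {ξ : ℝ} (hξ : 1 ≤ ξ) : TT δ ξ ≤ TT δ 1 + 25 * (ξ - 1) := by
  have := int_le_const (yAA_cont hδ hδ1) (a := 1) (b := ξ) (C := 25) hξ
    fun y hy => by
      have h0 : (0:ℝ) < y := by linarith [hy.1]
      rw [abs_of_nonneg h0.le]
      calc y * AA δ y ≤ y * (25 / y) := by gcongr; exact AA_le_tail hδ hy.1
        _ = 25 := by field_simp
  rw [← TT_sub hδ hδ1] at this; linarith

/-- The bounds of order `1 / √δ` shared by the primitives `SS` and `TT`, the two choices of `V` to
which it is applied. -/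
lemma growth {δ : ℝ} (hδ : 0 < δ) (hδ1 : δ ≤ 1) {V : ℝ → ℝ} (hm : Monotone V) (h1 : V 1 ≤ SS δ 1)
    (ht : ∀ ξ, 1 ≤ ξ → V ξ ≤ V 1 + 25 * (ξ - 1)) :
    (∀ ξ, ξ ≤ 1 → V ξ ≤ 40 / Real.sqrt δ) ∧ ∀ ξ, 1 ≤ ξ → V ξ ≤ 40 / Real.sqrt δ * ξ := by
  have h2 := SS_one_sqrt hδ hδ1
  refine ⟨fun ξ hξ => (hm hξ).trans (h1.trans h2), fun ξ hξ => ?_⟩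
  have h3 : 40 ≤ 40 / Real.sqrt δ := by
    rw [le_div_iff₀ (Real.sqrt_pos.2 hδ)]
    have := Real.sqrt_le_one.2 hδ1
    linarith
  have h4 := ht ξ hξ
  nlinarith

/-- The lower bound `HH ≥ e⁻⁴⁰ / 64` on `[1/4, ∞)`, in the form in which it absorbs the additive
constants of `HH_one` and `HH_tail`. -/
lemma HH_ratio {δ : ℝ} (hδ : 0 < δ) (hδ1 : δ ≤ 1)
    (i : ℕ) {x : ℝ} (hx : 1/4 ≤ x) : 40 ≤ 2560 * Real.exp 40 * HH i δ x := by
  have h := (HH_quarter hδ hδ1 i).trans (HH_mono hδ hδ1 i (by norm_num) hx)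
  have e : Real.exp 40 * Real.exp (-40) = 1 := by rw [← Real.exp_add]; simp
  have h2 := mul_le_mul_of_nonneg_left h (by positivity : 0 ≤ 2560 * Real.exp 40)
  nlinarith

lemma ww_one_pos {δ : ℝ} (hδ : 0 < δ) (hδ1 : δ ≤ 1) (i : ℕ) : 0 < ww i δ 1 := by
  rw [ww_eq]
  have h := HH_ratio hδ hδ1 i (x := 1) (by norm_num)
  have : 0 < HH i δ 1 := by
    by_contra! hc
    have := mul_nonpos_of_nonneg_of_nonpos (by positivity : 0 ≤ 2560 * Real.exp 40) hc
    linarith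
  positivity

/-- The weight on `[3/4, 1]` is comparable with its maximum on `[0, 1]`. -/
lemma ww_mid {δ : ℝ} (hδ : 0 < δ) (hδ1 : δ ≤ 1) (i : ℕ) {ξ : ℝ} (hξ : 3/4 ≤ ξ) :
    ww i δ 1 ≤ 2 * Real.exp 40 * (1 + 2560 * Real.exp 40) * ww i δ ξ := by
  have h0 := HH_ratio hδ hδ1 i (x := 3/4) (by norm_num)
  have h1 := HH_one hδ hδ1 i
  have h2 : Real.exp (SS δ 1) ≤ Real.exp 40 * Real.exp (SS δ (3/4)) := by
    rw [← Real.exp_add]; exact Real.exp_le_exp.2 (by linarith [SS_one_le hδ hδ1])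
  have h3 := HH_nonneg hδ hδ1 i (ξ := 3/4) (by norm_num)
  have h4 := HH_nonneg hδ hδ1 i (ξ := 1) (by norm_num)
  have h5 : HH i δ 1 ≤ (1 + 2560 * Real.exp 40) * HH i δ (3/4) := by linarith
  have h6 := ww_mono hδ hδ1 i (by norm_num) hξ
  rw [ww_eq i δ (3/4)] at h6
  rw [ww_eq i δ 1]
  calc 1 * (Real.exp (SS δ 1) * HH i δ 1)
      ≤ 1 * ((Real.exp 40 * Real.exp (SS δ (3/4))) *
          ((1 + 2560 * Real.exp 40) * HH i δ (3/4))) := by gcongr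
    _ = 4/3 * Real.exp 40 * (1 + 2560 * Real.exp 40) *
          (3/4 * (Real.exp (SS δ (3/4)) * HH i δ (3/4))) := by ring
    _ ≤ 2 * Real.exp 40 * (1 + 2560 * Real.exp 40) * ww i δ ξ := by
          gcongr; norm_num

/-- Beyond `1` the weight grows at most polynomially, because `a_δ(y) ≤ 25 / y` there. -/
lemma ww_tail {δ : ℝ} (hδ : 0 < δ) (hδ1 : δ ≤ 1) (i : ℕ) {ξ : ℝ} (hξ : 1 ≤ ξ) :
    ww i δ ξ ≤ (1 + 2560 * Real.exp 40) * ww i δ 1 * ξ ^ 27 := by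
  have h0 := HH_ratio hδ hδ1 i (x := 1) (by norm_num)
  have h1 := HH_tail hδ hδ1 i hξ
  have h2 := SS_tail_log hδ hδ1 hξ
  have h4 := HH_nonneg hδ hδ1 i (ξ := 1) (by norm_num)
  have h6 := HH_nonneg hδ hδ1 i (ξ := ξ) (by linarith)
  have h5 : HH i δ ξ ≤ ξ * ((1 + 2560 * Real.exp 40) * HH i δ 1) := by
    have : HH i δ 1 ≤ ξ * HH i δ 1 := le_mul_of_one_le_left h4 hξ
    nlinarith
  rw [ww_eq, ww_eq]
  calc ξ * (Real.exp (SS δ ξ) * HH i δ ξ)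
      ≤ ξ * ((ξ ^ 25 * Real.exp (SS δ 1)) * (ξ * ((1 + 2560 * Real.exp 40) * HH i δ 1))) := by
        gcongr
    _ = _ := by ring

/-! ### Differentiation under the integral -/

/-- Differentiation in the parameter `p` of a double integral over `{0 < z ≤ ξ}` whose integrand
carries a factor `exp (-p (V ξ - V z))` with `V` increasing: the derivative is bounded by the
integral with the exponential factors dropped and `V ξ - V z` replaced by `V ξ`. -/
lemma deriv_double {h g S V W : ℝ → ℝ} {Cg q p : ℝ} (hh : Measurable h) (hg : Continuous g)
    (hg0 : ∀ z, 0 ≤ z → 0 ≤ g z) (hgC : ∀ z, 0 ≤ z → g z ≤ Cg)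
    (hS : Continuous S) (hV : Continuous V) (hW : Continuous W)
    (hS0 : ∀ z, 0 ≤ z → 0 ≤ S z) (hV0 : ∀ z, 0 ≤ z → 0 ≤ V z)
    (hVm : Monotone V) (hWm : Monotone W) (hq : 0 ≤ q) (hp : 0 < p)
    (hint : IntegrableOn (fun ξ => (1 + ξ ^ 2) * (1 + V ξ) * (ξ * |h ξ| * Real.exp (S ξ)))
      (Ioi 0)) :
    ∃ d, HasDerivAt (fun p' => ∫ ξ in Ioi (0:ℝ), ξ * h ξ * ∫ z in (0:ℝ)..ξ,
        g z * Real.exp (S ξ - S z - q * (W ξ - W z) - p' * (V ξ - V z))) d p ∧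
      |d| ≤ ∫ ξ in Ioi (0:ℝ), V ξ * (|h ξ| * (ξ * ∫ z in (0:ℝ)..ξ,
        g z * Real.exp (S ξ - S z))) := by
  set m : Measure ℝ := volume.restrict (Ioi (0:ℝ)) with hm
  set D : Set (ℝ × ℝ) := {x | x.2 ≤ x.1} with hD
  have hDm : MeasurableSet D := measurableSet_le measurable_snd measurable_fst
  -- the integrand over the product, its derivative, and the two dominating functions
  let F : ℝ → ℝ × ℝ → ℝ := fun p' => D.indicator fun x =>
    x.1 * h x.1 * (g x.2 * Real.exp (S x.1 - S x.2 - q * (W x.1 - W x.2) - p' * (V x.1 - V x.2)))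
  let F' : ℝ → ℝ × ℝ → ℝ := fun p' x => -(V x.1 - V x.2) * F p' x
  let B : ℝ × ℝ → ℝ := D.indicator fun x =>
    V x.1 * (|h x.1| * (x.1 * (g x.2 * Real.exp (S x.1 - S x.2))))
  let M : ℝ × ℝ → ℝ := fun x => ((1 + x.1 ^ 2) * (1 + V x.1) * (x.1 * |h x.1| * Real.exp (S x.1)))
    * (Cg * (1 + x.2 ^ 2)⁻¹)
  have hM : Integrable M (m.prod m) :=
    Integrable.mul_prod hint ((integrable_inv_one_add_sq.restrict).const_mul Cg)
  have hh1 : Measurable fun x : ℝ × ℝ => h x.1 := hh.comp measurable_fst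
  have hFm : ∀ p', Measurable (F p') := fun p' => by
    refine Measurable.indicator ?_ hDm
    exact (measurable_fst.mul hh1).mul (Continuous.measurable (by fun_prop))
  have hVx : Measurable fun x : ℝ × ℝ => V x.1 - V x.2 :=
    Continuous.measurable (by fun_prop)
  have hF'm : ∀ p', Measurable (F' p') := fun p' => hVx.neg.mul (hFm p')
  have hBm : Measurable B := by
    refine Measurable.indicator ?_ hDm
    have h1 : Measurable fun x : ℝ × ℝ => V x.1 := Continuous.measurable (by fun_prop)
    have h2 : Measurable fun x : ℝ × ℝ => g x.2 * Real.exp (S x.1 - S x.2) :=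
      Continuous.measurable (by fun_prop)
    have h3 : Measurable fun x : ℝ × ℝ => |h x.1| := measurable_abs.comp hh1
    exact h1.mul (h3.mul (measurable_fst.mul h2))
  have hpos : ∀ᵐ x ∂(m.prod m), 0 < x.1 ∧ 0 < x.2 := by
    have h1 : ∀ᵐ x ∂(m.prod m), x ∈ Ioi (0:ℝ) ×ˢ Ioi (0:ℝ) := by
      rw [hm, Measure.prod_restrict]
      exact ae_restrict_mem (measurableSet_Ioi.prod measurableSet_Ioi)
    filter_upwards [h1] with x hx using hx
  have key : ∀ x : ℝ × ℝ, 0 < x.1 → 0 < x.2 → x ∈ D →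
      0 ≤ V x.1 - V x.2 ∧ V x.1 - V x.2 ≤ V x.1 ∧
      |h x.1| * (x.1 * (g x.2 * Real.exp (S x.1 - S x.2))) * (1 + V x.1) ≤ M x := by
    intro x h1 h2 hx
    have hV1 := hV0 _ h1.le
    refine ⟨by linarith [hVm hx], by linarith [hV0 _ h2.le], ?_⟩
    have e1 : Real.exp (S x.1 - S x.2) ≤ Real.exp (S x.1) :=
      Real.exp_le_exp.2 (by linarith [hS0 _ h2.le])
    have e2 : 1 ≤ (1 + x.1 ^ 2) * (1 + x.2 ^ 2)⁻¹ := by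
      rw [← div_eq_mul_inv, le_div_iff₀ (by positivity)]
      have : x.2 ≤ x.1 := hx
      nlinarith
    have e3 := hgC _ h2.le
    have e4 := hg0 _ h2.le
    calc |h x.1| * (x.1 * (g x.2 * Real.exp (S x.1 - S x.2))) * (1 + V x.1)
        ≤ |h x.1| * (x.1 * (Cg * Real.exp (S x.1))) * (1 + V x.1) := by gcongr; linarith
      _ ≤ |h x.1| * (x.1 * (Cg * Real.exp (S x.1))) * (1 + V x.1) *
            ((1 + x.1 ^ 2) * (1 + x.2 ^ 2)⁻¹) := by
          refine le_mul_of_one_le_right ?_ e2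
          have : 0 ≤ Cg := by linarith
          positivity
      _ = M x := by simp only [M]; ring
  have hFle : ∀ p', 0 < p' → ∀ x : ℝ × ℝ, 0 < x.1 → 0 < x.2 → x ∈ D →
      |F p' x| ≤ |h x.1| * (x.1 * (g x.2 * Real.exp (S x.1 - S x.2))) := by
    intro p' hp' x h1 h2 hx
    obtain ⟨k1, -, -⟩ := key x h1 h2 hx
    have e4 := hg0 _ h2.le
    simp only [F, indicator_of_mem hx, abs_mul, abs_of_pos h1, abs_of_nonneg e4,
      abs_of_pos (Real.exp_pos _)]
    have e5 : Real.exp (S x.1 - S x.2 - q * (W x.1 - W x.2) - p' * (V x.1 - V x.2)) ≤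
        Real.exp (S x.1 - S x.2) := by
      refine Real.exp_le_exp.2 ?_
      have := mul_nonneg hq (sub_nonneg.2 (hWm hx))
      have := mul_nonneg hp'.le k1
      linarith
    have e6 := mul_le_mul_of_nonneg_left e5 (by positivity : 0 ≤ |h x.1| * (x.1 * g x.2))
    linarith
  have hBle : ∀ᵐ x ∂(m.prod m), 0 ≤ B x ∧ B x ≤ M x ∧ ∀ p', 0 < p' →
      |F p' x| ≤ M x ∧ |F' p' x| ≤ B x := by
    filter_upwards [hpos] with x hx
    obtain ⟨h1, h2⟩ := hx
    have hV1 := hV0 _ h1.le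
    by_cases hxD : x ∈ D
    · obtain ⟨k1, k2, k3⟩ := key x h1 h2 hxD
      have e4 := hg0 _ h2.le
      have k4 : 0 ≤ |h x.1| * (x.1 * (g x.2 * Real.exp (S x.1 - S x.2))) := by positivity
      have eB : B x = V x.1 * (|h x.1| * (x.1 * (g x.2 * Real.exp (S x.1 - S x.2)))) :=
        indicator_of_mem hxD _
      refine ⟨by rw [eB]; positivity, by rw [eB]; nlinarith, fun p' hp' => ?_⟩
      have k5 := hFle p' hp' x h1 h2 hxD
      refine ⟨by nlinarith, ?_⟩
      simp only [F', eB, abs_mul, abs_neg, abs_of_nonneg k1]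
      exact mul_le_mul k2 k5 (abs_nonneg _) hV1
    · have eF : ∀ p', F p' x = 0 := fun p' => indicator_of_notMem hxD _
      have eB : B x = 0 := indicator_of_notMem hxD _
      have hM0 : 0 ≤ M x := by
        have : 0 ≤ Cg := (hg0 0 le_rfl).trans (hgC 0 le_rfl)
        simp only [M]; positivity
      simp [F', eF, eB, hM0]
  have hBi : Integrable B (m.prod m) := by
    refine hM.mono' hBm.aestronglyMeasurable ?_
    filter_upwards [hBle] with x hx
    rw [Real.norm_eq_abs, abs_of_nonneg hx.1]; exact hx.2.1
  have hFi : ∀ p', 0 < p' → Integrable (F p') (m.prod m) := fun p' hp' => by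
    refine hM.mono' (hFm p').aestronglyMeasurable ?_
    filter_upwards [hBle] with x hx using (hx.2.2 p' hp').1
  -- an iterated integral over the triangle is an integral over the product
  have iter : ∀ (c : ℝ → ℝ) (f : ℝ → ℝ → ℝ),
      Integrable (D.indicator fun x => c x.1 * f x.1 x.2) (m.prod m) →
      ∫ x, (D.indicator fun x => c x.1 * f x.1 x.2) x ∂(m.prod m) =
        ∫ ξ in Ioi (0:ℝ), c ξ * ∫ z in (0:ℝ)..ξ, f ξ z := by
    intro c f hi
    rw [integral_prod _ hi]
    refine setIntegral_congr_fun measurableSet_Ioi fun ξ (hξ : 0 < ξ) => ?_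
    have e : (fun z => (D.indicator fun x : ℝ × ℝ => c x.1 * f x.1 x.2) (ξ, z)) =
        (Iic ξ).indicator fun z => c ξ * f ξ z := by
      ext z; simp [indicator, hD]
    rw [e, integral_indicator measurableSet_Iic, hm, Measure.restrict_restrict measurableSet_Iic,
      inter_comm, Ioi_inter_Iic, integral_const_mul, intervalIntegral.integral_of_le hξ.le]
  have hder := (hasDerivAt_integral_of_dominated_loc_of_deriv_le (μ := m.prod m) (F := F) (F' := F')
    (x₀ := p) (s := Ioi 0) (bound := B) (Ioi_mem_nhds hp)
    (Eventually.of_forall fun p' => (hFm p').aestronglyMeasurable) (hFi p hp)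
    (hF'm p).aestronglyMeasurable
    (by filter_upwards [hBle] with x hx p' hp' using (hx.2.2 p' hp').2) hBi
    (by
      refine Eventually.of_forall fun x p' _ => ?_
      by_cases hxD : x ∈ D
      · have eF : (fun p' => F p' x) = fun p' => x.1 * h x.1 * (g x.2 *
            Real.exp (S x.1 - S x.2 - q * (W x.1 - W x.2) - p' * (V x.1 - V x.2))) := by
          ext p'; exact indicator_of_mem hxD _
        have eF' : F' p' x = -(V x.1 - V x.2) * (x.1 * h x.1 * (g x.2 *
            Real.exp (S x.1 - S x.2 - q * (W x.1 - W x.2) - p' * (V x.1 - V x.2)))) := by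
          simp only [F', F, indicator_of_mem hxD]
        rw [eF, eF']
        refine ((((((hasDerivAt_id p').mul_const (V x.1 - V x.2)).const_sub
          (S x.1 - S x.2 - q * (W x.1 - W x.2))).exp.const_mul (g x.2)).const_mul
          (x.1 * h x.1))).congr_deriv ?_
        simp only [id]; ring
      · have eF : (fun p' => F p' x) = fun _ => 0 := by
          ext p'; exact indicator_of_notMem hxD _
        have eF' : F' p' x = 0 := by simp only [F', F, indicator_of_notMem hxD, mul_zero]
        rw [eF, eF']; exact hasDerivAt_const _ _)).2
  refine ⟨_, hder.congr_of_eventuallyEq ?_, ?_⟩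
  · filter_upwards [Ioi_mem_nhds hp] with p' hp'
    exact (iter (fun ξ => ξ * h ξ) (fun ξ z => g z *
      Real.exp (S ξ - S z - q * (W ξ - W z) - p' * (V ξ - V z))) (hFi p' hp')).symm
  · have eB : B = D.indicator fun x => (V x.1 * (|h x.1| * x.1)) *
        (g x.2 * Real.exp (S x.1 - S x.2)) := by
      simp only [B]; congr 1; ext x; ring
    have e2 := iter (fun ξ => V ξ * (|h ξ| * ξ)) (fun ξ z => g z * Real.exp (S ξ - S z))
      (by rw [eB] at hBi; exact hBi)
    rw [← Real.norm_eq_abs]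
    calc ‖∫ x, F' p x ∂(m.prod m)‖ ≤ ∫ x, B x ∂(m.prod m) := by
          refine norm_integral_le_of_norm_le hBi ?_
          filter_upwards [hBle] with x hx using (hx.2.2 p hp).2
      _ = _ := by
          rw [eB, e2]
          congr 1; ext ξ; ring

/-! ### The LSW profile and its self-convolution -/

lemma ab_int {x : ℝ} (hx0 : 0 ≤ x) (hx : x < 1/2) :
    IntervalIntegrable (fun y => aF 0 y * bF 0 y) volume 0 x := by
  have hac : ContinuousOn (aF 0) (uIcc 0 x) := by
    rw [uIcc_of_le hx0]
    exact continuousOn_const.div (Dd_cont 0).continuousOn fun y hy =>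
      (lt_of_lt_of_le (by nlinarith [hy.1, hy.2])
        (Dd_ge le_rfl zero_le_one hy.1 (by linarith [hy.2]))).ne'
  have hr : IntervalIntegrable (fun y : ℝ => y ^ (-(2:ℝ)/3)) volume 0 x :=
    intervalIntegral.intervalIntegrable_rpow' (by norm_num)
  exact ((continuous_const.intervalIntegrable _ _).sub (hr.const_mul _)).continuousOn_mul hac

lemma Dd_zero_pos {y : ℝ} (h0 : 0 ≤ y) (h : y < 1/2) : 0 < Dd 0 y :=
  lt_of_lt_of_le (by nlinarith) (Dd_ge le_rfl zero_le_one h0 (by linarith))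

lemma bF_zero_nonneg {y : ℝ} (h : 1/4 ≤ y) : 0 ≤ bF 0 y := by
  obtain ⟨t₀, h1, h2, h3, h4, hf⟩ := Dd_factor
  obtain ⟨t, ht, hty, hte, -⟩ := hf 0 y (by linarith)
  have ht2 : 62/100 ≤ t := by
    by_contra! hc
    have := pow_le_pow_left₀ ht hc.le 3
    norm_num at this; linarith
  have e : y ^ (-(2:ℝ)/3) = (t ^ 2)⁻¹ := by
    rw [← hte, ← Real.rpow_natCast, ← Real.rpow_mul (by linarith), ← Real.rpow_neg (by linarith)]
    norm_num
  rw [bF, e, h4]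
  have : t₀ ^ 2 * (t ^ 2)⁻¹ ≤ 2 := by
    rw [← div_eq_mul_inv, div_le_iff₀ (by positivity)]; nlinarith
  linarith

/-- The profile before normalization. -/
noncomputable def f0 (z : ℝ) : ℝ := Real.exp (-∫ y in (0:ℝ)..z, aF 0 y * bF 0 y)

lemma f0_pos (z : ℝ) : 0 < f0 z := Real.exp_pos _

lemma f0_eq {z : ℝ} (h0 : 0 ≤ z) (h : z < 1/2) :
    f0 z = 1 / Dd 0 z * Real.exp (-∫ y in (0:ℝ)..z, aF 0 y) := by
  have hk := exp_key (δ := 0) (εt := 0) (ε := 0) le_rfl h0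
    fun y hy => Dd_zero_pos hy.1 (lt_of_le_of_lt hy.2 h)
  have h1 : Dd 0 0 = 1 := by simp [Dd]
  simp only [zero_mul, sub_zero, mul_one, h1, div_one] at hk
  rw [f0, Real.exp_neg, hk, Real.exp_neg, mul_inv, one_div]

lemma aF_zero_int {z : ℝ} (h0 : 0 ≤ z) (h : z < 1/2) :
    IntervalIntegrable (aF 0) volume 0 z := by
  refine ContinuousOn.intervalIntegrable ?_
  rw [uIcc_of_le h0]
  exact continuousOn_const.div (Dd_cont 0).continuousOn fun y hy =>
      (Dd_zero_pos hy.1 (lt_of_le_of_lt hy.2 h)).ne'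

lemma aF_zero_pos {y : ℝ} (h0 : 0 ≤ y) (h : y < 1/2) : 0 < aF 0 y :=
  one_div_pos.2 (Dd_zero_pos h0 h)

lemma f0_anti {z w : ℝ} (hz : 1/4 ≤ z) (hzw : z ≤ w) (hw : w < 1/2) : f0 w ≤ f0 z := by
  have h1 := ab_int (by linarith) (lt_of_le_of_lt hzw hw)
  have h2 := ab_int (by linarith) hw
  have h3 := intervalIntegral.integral_interval_sub_left h2 h1
  have h4 : 0 ≤ ∫ y in z..w, aF 0 y * bF 0 y :=
    intervalIntegral.integral_nonneg hzw fun y hy => mul_nonneg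
      (aF_zero_pos (by linarith [hy.1]) (lt_of_le_of_lt hy.2 hw)).le
      (bF_zero_nonneg (hz.trans hy.1))
  exact Real.exp_le_exp.2 (by linarith)

lemma f0_le {z : ℝ} (h0 : 0 ≤ z) (h : z < 1/2) : f0 z ≤ 160 := by
  have small : ∀ x : ℝ, 0 ≤ x → x ≤ 1/4 → f0 x ≤ 160 := fun x hx hx1 => by
    rw [f0_eq hx (by linarith)]
    have h1 : 1 / Dd 0 x ≤ 160 := by
      rw [div_le_iff₀ (Dd_zero_pos hx (by linarith))]
      have := Dd_ge le_rfl zero_le_one hx (by linarith)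
      nlinarith
    have h2 : 0 ≤ ∫ y in (0:ℝ)..x, aF 0 y :=
      intervalIntegral.integral_nonneg hx fun y hy => (aF_zero_pos hy.1 (by linarith [hy.2])).le
    have h3 : Real.exp (-∫ y in (0:ℝ)..x, aF 0 y) ≤ 1 := Real.exp_le_one_iff.2 (by linarith)
    calc _ ≤ (160:ℝ) * 1 := by gcongr
      _ = 160 := by norm_num
  rcases le_total z (1/4) with hz | hz
  · exact small z h0 hz
  · exact (f0_anti le_rfl hz h).trans (small _ (by norm_num) le_rfl)

lemma f0_aemeas : AEMeasurable f0 (volume.restrict (Ico (0:ℝ) (1/2))) := by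
  have hm : MonotoneOn (fun z => ∫ y in (0:ℝ)..z, aF 0 y) (Ico (0:ℝ) (1/2)) := by
    intro z hz w hw hzw
    have h3 := intervalIntegral.integral_interval_sub_left (aF_zero_int hw.1 hw.2)
      (aF_zero_int hz.1 hz.2)
    have h4 : 0 ≤ ∫ y in z..w, aF 0 y := intervalIntegral.integral_nonneg hzw fun y hy =>
      (aF_zero_pos (hz.1.trans hy.1) (lt_of_le_of_lt hy.2 hw.2)).le
    beta_reduce
    linarith
  have h1 := aemeasurable_restrict_of_monotoneOn (μ := volume) measurableSet_Ico hm
  have h2 : AEMeasurable (fun z => 1 / Dd 0 z * Real.exp (-∫ y in (0:ℝ)..z, aF 0 y))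
      (volume.restrict (Ico (0:ℝ) (1/2))) :=
    ((Dd_cont 0).measurable.const_div 1).aemeasurable.mul
      (Real.measurable_exp.comp_aemeasurable h1.neg)
  refine h2.congr ?_
  filter_upwards [ae_restrict_mem measurableSet_Ico] with z hz using (f0_eq hz.1 hz.2).symm

/-- The normalization constant of the profile. -/
noncomputable def Z0 : ℝ := ∫ t in (0:ℝ)..(1/2 : ℝ), t * f0 t

lemma Z0_pos : 0 < Z0 := by
  refine intervalIntegral.intervalIntegral_pos_of_pos_on ?_
    (fun x hx => mul_pos hx.1 (f0_pos x)) (by norm_num)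
  rw [intervalIntegrable_iff_integrableOn_Ico_of_le (by norm_num)]
  have hm : AEMeasurable (fun t => t * f0 t) (volume.restrict (Ico (0:ℝ) (1/2))) :=
    aemeasurable_id.mul f0_aemeas
  refine Integrable.mono' (integrable_const (160:ℝ)) hm.aestronglyMeasurable ?_
  filter_upwards [ae_restrict_mem measurableSet_Ico] with z hz
  have h1 := f0_le hz.1 hz.2
  have h2 := f0_pos z
  have h3 : z < 1/2 := hz.2
  rw [Real.norm_eq_abs, abs_of_nonneg (mul_nonneg hz.1 h2.le)]
  nlinarith [hz.1]

lemma Phi_eq (z : ℝ) : PhiLSW z = if z ≤ 1/2 then f0 z / Z0 else 0 := rfl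

lemma Phi_nonneg (z : ℝ) : 0 ≤ PhiLSW z := by
  rw [Phi_eq]; split_ifs
  · exact div_nonneg (f0_pos z).le Z0_pos.le
  · exact le_rfl

/-- At the single point `1/2` the exponent of the profile is a divergent integral, so that the
profile has a conventional value there, which enters the bound. -/
lemma Phi_bdd : ∃ M, 0 ≤ M ∧ ∀ z, 0 ≤ z → PhiLSW z ≤ M := by
  refine ⟨max 160 (f0 (1/2)) / Z0, div_nonneg (le_max_of_le_left (by norm_num)) Z0_pos.le,
    fun z hz => ?_⟩
  rw [Phi_eq]; split_ifs with h
  · refine div_le_div_of_nonneg_right ?_ Z0_pos.le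
    rcases h.lt_or_eq with h | rfl
    · exact (f0_le hz h).trans (le_max_left _ _)
    · exact le_max_right _ _
  · exact div_nonneg (le_max_of_le_left (by norm_num)) Z0_pos.le

lemma Phi_lower : ∃ c, 0 < c ∧ ∀ z ∈ Icc (5/16:ℝ) (7/16), c ≤ PhiLSW z := by
  refine ⟨f0 (7/16) / Z0, div_pos (f0_pos _) Z0_pos, fun z hz => ?_⟩
  rw [Phi_eq, if_pos (by linarith [hz.2])]
  exact div_le_div_of_nonneg_right (f0_anti (by linarith [hz.1]) hz.2 (by norm_num)) Z0_pos.le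

lemma Phi_int {z : ℝ} (hz : 0 ≤ z) : IntervalIntegrable PhiLSW volume 0 z := by
  obtain ⟨M, -, hM⟩ := Phi_bdd
  rw [intervalIntegrable_iff_integrableOn_Ioc_of_le hz]
  have hm : AEMeasurable PhiLSW (volume.restrict (Ioc 0 z)) := by
    have h1 : AEMeasurable ((Ico (0:ℝ) (1/2)).indicator fun z => f0 z / Z0) volume :=
      (aemeasurable_indicator_iff measurableSet_Ico).2 (f0_aemeas.div_const Z0)
    refine h1.restrict.congr ?_
    have h2 : ∀ᵐ y : ℝ ∂(volume.restrict (Ioc 0 z)), y ≠ 1/2 :=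
      ae_restrict_of_ae (Measure.ae_ne volume _)
    filter_upwards [ae_restrict_mem measurableSet_Ioc, h2] with y hy hy2
    rw [Phi_eq]
    rcases lt_or_gt_of_ne hy2 with h | h
    · rw [indicator_of_mem (show y ∈ Ico (0:ℝ) (1/2) from ⟨hy.1.le, h⟩), if_pos h.le]
    · rw [indicator_of_notMem (fun h' => absurd h'.2 (not_lt.2 h.le)), if_neg (not_le.2 h)]
  refine Integrable.mono' (integrable_const M) hm.aestronglyMeasurable ?_
  filter_upwards [ae_restrict_mem measurableSet_Ioc] with y hy
  rw [Real.norm_eq_abs, abs_of_nonneg (Phi_nonneg y)]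
  exact hM y hy.1.le

lemma conv_nonneg {z : ℝ} (hz : 0 ≤ z) : 0 ≤ conv PhiLSW PhiLSW z :=
  mul_nonneg (by norm_num) (intervalIntegral.integral_nonneg hz
    fun y _ => mul_nonneg (Phi_nonneg _) (Phi_nonneg _))

lemma conv_bdd : ∃ M, ∀ z ∈ Icc (0:ℝ) 1, |conv PhiLSW PhiLSW z| ≤ M := by
  obtain ⟨M, hM0, hM⟩ := Phi_bdd
  refine ⟨M * M, fun z hz => ?_⟩
  have h := intervalIntegral.norm_integral_le_of_norm_le_const (a := 0) (b := z) (C := M * M)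
    (f := fun y => PhiLSW (z - y) * PhiLSW y) fun y hy => by
      rw [uIoc_of_le hz.1] at hy
      rw [Real.norm_eq_abs, abs_of_nonneg (mul_nonneg (Phi_nonneg _) (Phi_nonneg _))]
      exact mul_le_mul (hM _ (by linarith [hy.2])) (hM _ hy.1.le) (Phi_nonneg _) hM0
  rw [Real.norm_eq_abs, sub_zero, abs_of_nonneg hz.1] at h
  rw [conv, abs_mul, abs_of_pos (by norm_num : (0:ℝ) < 1/2)]
  have : M * M * z ≤ M * M * 1 := by gcongr; exact hz.2
  nlinarith [mul_nonneg hM0 hM0]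

lemma conv_tail {z : ℝ} (hz : 1 ≤ z) : conv PhiLSW PhiLSW z = 0 := by
  rw [conv, intervalIntegral.integral_zero_ae, mul_zero]
  filter_upwards [Measure.ae_ne volume (1/2 : ℝ)] with y hy _
  rcases lt_or_gt_of_ne hy with h | h
  · rw [Phi_eq (z - y), if_neg (by linarith), zero_mul]
  · rw [Phi_eq y, if_neg (by linarith), mul_zero]

lemma conv_lower : ∃ c, 0 < c ∧ ∀ z ∈ Icc (3/4:ℝ) (13/16), c ≤ conv PhiLSW PhiLSW z := by
  obtain ⟨c, hc, hcl⟩ := Phi_lower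
  obtain ⟨M, hM0, hM⟩ := Phi_bdd
  refine ⟨c * c / 32, by positivity, fun z hz => ?_⟩
  have hz0 : 0 ≤ z := by linarith [hz.1]
  have hi := Phi_int hz0
  have hi2 : IntervalIntegrable (fun y => PhiLSW (z - y)) volume 0 z := by
    have := (hi.comp_sub_left z).symm
    simpa using this
  have hi3 : IntervalIntegrable (fun y => PhiLSW (z - y) * PhiLSW y) volume 0 z := by
    rw [intervalIntegrable_iff_integrableOn_Ioc_of_le hz0] at hi hi2 ⊢
    refine Integrable.bdd_mul (c := M) hi hi2.aestronglyMeasurable ?_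
    filter_upwards [ae_restrict_mem measurableSet_Ioc] with y hy
    rw [Real.norm_eq_abs, abs_of_nonneg (Phi_nonneg _)]
    exact hM _ (by linarith [hy.2])
  have h1 : ∫ y in (3/8:ℝ)..(7/16), PhiLSW (z - y) * PhiLSW y ≤
      ∫ y in (0:ℝ)..z, PhiLSW (z - y) * PhiLSW y :=
    intervalIntegral.integral_mono_interval (by norm_num) (by norm_num) (by linarith [hz.1])
      (Eventually.of_forall fun y => mul_nonneg (Phi_nonneg _) (Phi_nonneg _)) hi3
  have h2 : ∫ y in (3/8:ℝ)..(7/16), c * c ≤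
      ∫ y in (3/8:ℝ)..(7/16), PhiLSW (z - y) * PhiLSW y := by
    refine intervalIntegral.integral_mono_on (by norm_num) intervalIntegrable_const
      (hi3.mono_set ?_) fun y hy => ?_
    · rw [uIcc_of_le hz0, uIcc_of_le (by norm_num)]
      exact Icc_subset_Icc (by norm_num) (by linarith [hz.1])
    · have h3 := hcl y ⟨by linarith [hy.1], hy.2⟩
      have h4 := hcl (z - y) ⟨by linarith [hy.2, hz.1], by linarith [hy.1, hz.2]⟩
      exact mul_le_mul h4 h3 hc.le (Phi_nonneg _)
  simp only [intervalIntegral.integral_const, smul_eq_mul] at h2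
  rw [conv]
  linarith

/-! ### Rewriting the functionals through the weight -/

lemma exponent_eq {δ ε εt z ξ : ℝ} (hδ : 0 < δ) (hδ1 : δ ≤ 1) (hz : 0 ≤ z) (hzξ : z ≤ ξ) :
    ∫ y in z..ξ, aF δ y * (1 - εt * y - ε) =
      SS δ ξ - SS δ z - εt * (TT δ ξ - TT δ z) - ε * (SS δ ξ - SS δ z) := by
  have hS := (AA_cont hδ hδ1).intervalIntegrable (μ := volume) z ξ
  have hT := (yAA_cont hδ hδ1).intervalIntegrable (μ := volume) z ξ
  rw [SS_sub hδ hδ1, TT_sub hδ hδ1, ← intervalIntegral.integral_const_mul εt,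
    ← intervalIntegral.integral_const_mul ε, ← intervalIntegral.integral_sub hS (hT.const_mul _),
    ← intervalIntegral.integral_sub (hS.sub (hT.const_mul _)) (hS.const_mul _)]
  refine intervalIntegral.integral_congr fun y hy => ?_
  rw [uIcc_of_le hzξ] at hy
  simp only [AA, abs_of_nonneg (hz.trans hy.1)]
  ring

/-- The factor `D_δ(ξ) / D_δ(z)` from `exp_key` cancels `a_δ(ξ)` and produces `a_δ(z)`. -/
lemma Gam_eq {δ ε εt ξ : ℝ} (i : ℕ) (hδ : 0 < δ) (hδ1 : δ ≤ 1) (hξ : 0 ≤ ξ) :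
    aF δ ξ * Gam i δ ε εt ξ = ∫ z in (0:ℝ)..ξ, gamF i z * AA δ z *
      Real.exp (SS δ ξ - SS δ z - εt * (TT δ ξ - TT δ z) - ε * (SS δ ξ - SS δ z)) := by
  rw [Gam, ← intervalIntegral.integral_const_mul]
  refine intervalIntegral.integral_congr fun z hz => ?_
  rw [uIcc_of_le hξ] at hz
  have h1 := Dd_pos hδ hδ1 hξ
  have h2 := Dd_pos hδ hδ1 hz.1
  rw [exp_key hz.1 hz.2 fun y hy => Dd_pos hδ hδ1 (hz.1.trans hy.1),
    exponent_eq hδ hδ1 hz.1 hz.2, AA, abs_of_nonneg hz.1, aF_eq, aF_eq]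
  field_simp

lemma Gfull_eq {δ ε εt : ℝ} (i : ℕ) (h : ℝ → ℝ) (hδ : 0 < δ) (hδ1 : δ ≤ 1) :
    Gfull i δ ε εt h = ∫ ξ in Ioi (0:ℝ), ξ * h ξ * ∫ z in (0:ℝ)..ξ, gamF i z * AA δ z *
      Real.exp (SS δ ξ - SS δ z - εt * (TT δ ξ - TT δ z) - ε * (SS δ ξ - SS δ z)) := by
  refine setIntegral_congr_fun measurableSet_Ioi fun ξ (hξ : 0 < ξ) => ?_
  rw [← Gam_eq i hδ hδ1 hξ.le]; ring

lemma Ghat_eq {δ : ℝ} (i : ℕ) (h : ℝ → ℝ) (hδ : 0 < δ) (hδ1 : δ ≤ 1) :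
    Ghat i δ h = ∫ ξ in (0:ℝ)..1, h ξ * ww i δ ξ := by
  refine intervalIntegral.integral_congr fun ξ hξ => ?_
  rw [uIcc_of_le zero_le_one] at hξ
  have e := Gam_eq (ε := 0) (εt := 0) i hδ hδ1 hξ.1
  simp only [zero_mul, sub_zero] at e
  simp only [GamHat, ww]
  rw [← e]; ring

/-! ### Estimates -/

/-- The moment that controls the contribution of `ξ > 1`. -/
noncomputable def KK (N : ℕ) (β : ℝ) : ℝ := ∫ ξ in Ioi (1:ℝ), ξ ^ N * Real.exp (-(β * ξ))

lemma KK_int (N : ℕ) {β : ℝ} (hβ : 0 < β) :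
    IntegrableOn (fun ξ : ℝ => ξ ^ N * Real.exp (-(β * ξ))) (Ioi 1) := by
  have h := integrableOn_rpow_mul_exp_neg_mul_rpow (s := N) (p := 1) (b := β)
    (by have : (0:ℝ) ≤ N := by positivity
        linarith) one_pos hβ
  refine (h.mono_set (Ioi_subset_Ioi zero_le_one)).congr_fun (fun ξ _ => ?_) measurableSet_Ioi
  simp [Real.rpow_natCast]

lemma KK_nonneg (N : ℕ) (β : ℝ) : 0 ≤ KK N β :=
  setIntegral_nonneg measurableSet_Ioi fun ξ (hξ : 1 < ξ) => by positivity

/-- What membership of the ball of radius `μ` around `Φ_LSW * Φ_LSW` gives pointwise. -/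
lemma ball_bounds {β₁ β₂ μ : ℝ} (hβ₂ : 0 ≤ β₂) {h : ℝ → ℝ} (hmem : memZ β₁ β₂ h)
    (hn : normZ β₁ β₂ (fun z => h z - conv PhiLSW PhiLSW z) ≤ μ) :
    (∀ z ∈ Icc (0:ℝ) 1, |h z - conv PhiLSW PhiLSW z| ≤ μ) ∧
      ∀ z, 1 ≤ z → |h z| ≤ μ * Real.exp (-(β₁ * z)) := by
  obtain ⟨-, ⟨Mh, hMh⟩, hb2⟩ := hmem
  obtain ⟨Mc, hMc⟩ := conv_bdd
  have n1 : 0 ≤ normSup (fun z => h z - conv PhiLSW PhiLSW z) := by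
    refine Real.sSup_nonneg ?_
    rintro _ ⟨z, -, rfl⟩; exact abs_nonneg _
  have n2 : 0 ≤ normTail β₁ β₂ (fun z => h z - conv PhiLSW PhiLSW z) := by
    refine Real.sSup_nonneg ?_
    rintro _ ⟨z, hz, rfl⟩
    have : (0:ℝ) ≤ z := le_trans zero_le_one hz
    positivity
  rw [normZ] at hn
  constructor
  · intro z hz
    have hle : |h z - conv PhiLSW PhiLSW z| ≤ normSup (fun z => h z - conv PhiLSW PhiLSW z) := by
      refine le_csSup ⟨Mh + Mc, ?_⟩ ⟨z, hz, rfl⟩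
      rintro _ ⟨w, hw, rfl⟩
      exact (abs_sub _ _).trans (add_le_add (hMh ⟨w, hw, rfl⟩) (hMc w hw))
    linarith
  · intro z hz
    have e : (fun z => |h z - conv PhiLSW PhiLSW z| * Real.exp (β₁ * z) * z ^ β₂) '' Ici (1:ℝ) =
        (fun z => |h z| * Real.exp (β₁ * z) * z ^ β₂) '' Ici (1:ℝ) :=
      image_congr fun w hw => by rw [conv_tail hw, sub_zero]
    have hle : |h z| * Real.exp (β₁ * z) * z ^ β₂ ≤
        normTail β₁ β₂ (fun z => h z - conv PhiLSW PhiLSW z) := by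
      rw [normTail, e]; exact le_csSup hb2 ⟨z, hz, rfl⟩
    have h1 : 1 ≤ z ^ β₂ := Real.one_le_rpow hz hβ₂
    have h2 : |h z| * Real.exp (β₁ * z) ≤ |h z| * Real.exp (β₁ * z) * z ^ β₂ :=
      le_mul_of_one_le_right (by positivity) h1
    have h3 : |h z| = |h z| * Real.exp (β₁ * z) * Real.exp (-(β₁ * z)) := by
      rw [mul_assoc, ← Real.exp_add]; simp
    rw [h3]
    gcongr; linarith

section estimates
variable {β δ μ : ℝ} {h V : ℝ → ℝ} {i : ℕ}

/-- The integrability hypothesis of `deriv_double`. -/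
lemma hint_of {Mh : ℝ} (hβ : 0 < β) (hδ : 0 < δ) (hδ1 : δ ≤ 1) (hh : Measurable h)
    (hb : ∀ z ∈ Icc (0:ℝ) 1, |h z| ≤ Mh)
    (ht : ∀ z, 1 ≤ z → |h z| ≤ μ * Real.exp (-(β * z)))
    (hVc : Continuous V) (hVm : Monotone V) (hV0 : ∀ z, 0 ≤ z → 0 ≤ V z)
    (hV : ∀ ξ, 1 ≤ ξ → V ξ ≤ 40 / Real.sqrt δ * ξ) :
    IntegrableOn (fun ξ => (1 + ξ ^ 2) * (1 + V ξ) * (ξ * |h ξ| * Real.exp (SS δ ξ)))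
      (Ioi 0) := by
  have hSc := SS_cont hδ hδ1
  have hm : Measurable fun ξ => (1 + ξ ^ 2) * (1 + V ξ) * (ξ * |h ξ| * Real.exp (SS δ ξ)) := by
    have h1 : Measurable fun ξ : ℝ => |h ξ| := measurable_abs.comp hh
    have h2 : Measurable V := hVc.measurable
    have h3 : Measurable (SS δ) := hSc.measurable
    fun_prop
  rw [← Ioc_union_Ioi_eq_Ioi zero_le_one]
  refine IntegrableOn.union ?_ ?_
  · refine Integrable.mono' (integrable_const
      ((1 + 1 ^ 2) * (1 + V 1) * (1 * Mh * Real.exp (SS δ 1)))) hm.aestronglyMeasurable ?_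
    filter_upwards [ae_restrict_mem measurableSet_Ioc] with ξ hξ
    have h0 : 0 ≤ ξ := hξ.1.le
    have h1 := hV0 ξ h0
    have h2 := hVm hξ.2
    have h3 := hb ξ ⟨h0, hξ.2⟩
    have h4 := Real.exp_le_exp.2 (SS_mono hδ hδ1 hξ.2)
    have h5 : ξ ≤ 1 := hξ.2
    have h6 := (abs_nonneg _).trans h3
    have h7 := h1.trans h2
    rw [Real.norm_eq_abs, abs_of_nonneg (by positivity)]
    gcongr
  · refine Integrable.mono' (((KK_int 29 hβ).integrable).const_mul
      (2 * (1 + 40 / Real.sqrt δ) * μ * Real.exp (SS δ 1))) hm.aestronglyMeasurable ?_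
    filter_upwards [ae_restrict_mem measurableSet_Ioi] with ξ hξ
    have h5 : 1 ≤ ξ := le_of_lt hξ
    have h0 : 0 ≤ ξ := by linarith
    have h1 := hV0 ξ h0
    have h2 := hV ξ h5
    have h3 := ht ξ h5
    have h4 := SS_tail_log hδ hδ1 h5
    have h6 : 1 + ξ ^ 2 ≤ 2 * ξ ^ 2 := by nlinarith
    have h7 : 1 + V ξ ≤ (1 + 40 / Real.sqrt δ) * ξ := by linarith
    have h8 := (abs_nonneg _).trans h3
    have h9 : 0 ≤ (1 + 40 / Real.sqrt δ) * ξ := by positivity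
    rw [Real.norm_eq_abs, abs_of_nonneg (by positivity)]
    calc (1 + ξ ^ 2) * (1 + V ξ) * (ξ * |h ξ| * Real.exp (SS δ ξ))
        ≤ (2 * ξ ^ 2) * ((1 + 40 / Real.sqrt δ) * ξ) *
          (ξ * (μ * Real.exp (-(β * ξ))) * (ξ ^ 25 * Real.exp (SS δ 1))) := by gcongr
      _ = _ := by ring

lemma hw_int {Mh : ℝ} {k : ℝ → ℝ} (hδ : 0 < δ) (hδ1 : δ ≤ 1) (hk : Measurable k)
    (hb : ∀ z ∈ Icc (0:ℝ) 1, |k z| ≤ Mh) :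
    IntervalIntegrable (fun ξ => k ξ * ww i δ ξ) volume 0 1 := by
  rw [intervalIntegrable_iff_integrableOn_Ioc_of_le zero_le_one]
  have hw := ((ww_cont hδ hδ1 i).intervalIntegrable (μ := volume) 0 1)
  rw [intervalIntegrable_iff_integrableOn_Ioc_of_le zero_le_one] at hw
  refine Integrable.bdd_mul (c := Mh) hw hk.aestronglyMeasurable ?_
  filter_upwards [ae_restrict_mem measurableSet_Ioc] with y hy
  exact hb y ⟨hy.1.le, hy.2⟩

/-- `Ĝ_i[h]` dominates the value of the weight at `1`, up to the error `μ` in `h`: the mass of `h`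
on `[3/4, 13/16]` sees a weight comparable with the maximal one. The constant
`2 e⁴⁰ (1 + 2560 e⁴⁰)` is the one of `ww_mid`. -/
lemma Ghat_lower {c Mh : ℝ} (hδ : 0 < δ) (hδ1 : δ ≤ 1) (hh : Measurable h)
    (hb : ∀ z ∈ Icc (0:ℝ) 1, |h z| ≤ Mh) (hc : 0 < c) (hμ : 0 ≤ μ)
    (hlow : ∀ z ∈ Icc (0:ℝ) 1, 0 ≤ h z + μ)
    (hJ : ∀ z ∈ Icc (3/4:ℝ) (13/16), c ≤ h z + μ) :
    c / (16 * (2 * Real.exp 40 * (1 + 2560 * Real.exp 40))) * ww i δ 1 ≤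
      Ghat i δ h + μ * ww i δ 1 := by
  set C := 2 * Real.exp 40 * (1 + 2560 * Real.exp 40) with hC
  have hC0 : 0 < C := by positivity
  have hi := hw_int (i := i) hδ hδ1 hh hb
  have hwi := (ww_cont hδ hδ1 i).intervalIntegrable (μ := volume) 0 1
  have hi2 : IntervalIntegrable (fun ξ => (h ξ + μ) * ww i δ ξ) volume 0 1 := by
    simp only [add_mul]; exact hi.add (hwi.const_mul μ)
  have e1 : ∫ ξ in (0:ℝ)..1, (h ξ + μ) * ww i δ ξ =
      Ghat i δ h + μ * ∫ ξ in (0:ℝ)..1, ww i δ ξ := by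
    rw [Ghat_eq i h hδ hδ1, ← intervalIntegral.integral_const_mul,
      ← intervalIntegral.integral_add hi (hwi.const_mul μ)]
    simp only [add_mul]
  have e2 : ∫ ξ in (0:ℝ)..1, ww i δ ξ ≤ ww i δ 1 * (1 - 0) :=
    int_le_const (ww_cont hδ hδ1 i) zero_le_one fun ξ hξ => ww_mono hδ hδ1 i hξ.1 hξ.2
  have e3 : ∫ ξ in (3/4:ℝ)..(13/16), (h ξ + μ) * ww i δ ξ ≤
      ∫ ξ in (0:ℝ)..1, (h ξ + μ) * ww i δ ξ := by
    refine intervalIntegral.integral_mono_interval (by norm_num) (by norm_num) (by norm_num) ?_ hi2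
    filter_upwards [ae_restrict_mem measurableSet_Ioc] with ξ hξ
    exact mul_nonneg (hlow ξ ⟨hξ.1.le, hξ.2⟩) (ww_nonneg hδ hδ1 i hξ.1.le)
  have e4 : ∫ ξ in (3/4:ℝ)..(13/16), c * (ww i δ 1 / C) ≤
      ∫ ξ in (3/4:ℝ)..(13/16), (h ξ + μ) * ww i δ ξ := by
    refine intervalIntegral.integral_mono_on (by norm_num) intervalIntegrable_const
      (hi2.mono_set ?_) fun ξ hξ => ?_
    · rw [uIcc_of_le zero_le_one, uIcc_of_le (by norm_num)]
      exact Icc_subset_Icc (by norm_num) (by norm_num)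
    · have h1 : ww i δ 1 / C ≤ ww i δ ξ := by
        rw [div_le_iff₀ hC0, mul_comm]; exact ww_mid hδ hδ1 i hξ.1
      have h2 := hJ ξ hξ
      exact mul_le_mul h2 h1 (div_nonneg (ww_one_pos hδ hδ1 i).le hC0.le) (hc.le.trans h2)
  simp only [intervalIntegral.integral_const, smul_eq_mul] at e4
  have e5 : c / (16 * C) * ww i δ 1 = (13/16 - 3/4) * (c * (ww i δ 1 / C)) := by
    field_simp; norm_num
  have e6 := mul_le_mul_of_nonneg_left e2 hμ
  rw [e5]; linarith

lemma abs_int_le {Mh : ℝ} (hδ : 0 < δ) (hδ1 : δ ≤ 1) (hh : Measurable h)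
    (hb : ∀ z ∈ Icc (0:ℝ) 1, |h z| ≤ Mh) (hμ : 0 ≤ μ)
    (hlow : ∀ z ∈ Icc (0:ℝ) 1, 0 ≤ h z + μ) :
    ∫ ξ in (0:ℝ)..1, |h ξ| * ww i δ ξ ≤ Ghat i δ h + 2 * μ * ww i δ 1 := by
  have hi := hw_int (i := i) hδ hδ1 hh hb
  have hia := hw_int (i := i) hδ hδ1 (measurable_abs.comp hh) (Mh := Mh)
    (fun z hz => by simpa using hb z hz)
  have e : ∫ ξ in (0:ℝ)..1, (h ξ * ww i δ ξ + 2 * μ * ww i δ 1) =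
      Ghat i δ h + 2 * μ * ww i δ 1 := by
    rw [Ghat_eq i h hδ hδ1, intervalIntegral.integral_add hi intervalIntegrable_const]
    simp
  rw [← e]
  refine intervalIntegral.integral_mono_on zero_le_one hia (hi.add intervalIntegrable_const)
    fun ξ hξ => ?_
  have h1 := hlow ξ hξ
  have h2 := ww_nonneg hδ hδ1 i hξ.1
  have h3 := ww_mono hδ hδ1 i hξ.1 hξ.2
  have h4 : |h ξ| ≤ h ξ + 2 * μ := abs_le.2 ⟨by linarith, by linarith⟩
  have h5 := mul_le_mul_of_nonneg_right h4 h2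
  have h6 := mul_le_mul_of_nonneg_left h3 (by linarith : 0 ≤ 2 * μ)
  linarith

/-- The bound of `deriv_double`, split at `ξ = 1`: the tail is a polynomial against `exp (-β ξ)`. -/
lemma deriv_bound {Mh : ℝ} (hβ : 0 < β) (hδ : 0 < δ) (hδ1 : δ ≤ 1) (hh : Measurable h)
    (hb : ∀ z ∈ Icc (0:ℝ) 1, |h z| ≤ Mh)
    (ht : ∀ z, 1 ≤ z → |h z| ≤ μ * Real.exp (-(β * z)))
    (hV0 : ∀ z, 0 ≤ z → 0 ≤ V z)
    (hV1 : ∀ ξ, ξ ≤ 1 → V ξ ≤ 40 / Real.sqrt δ)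
    (hV : ∀ ξ, 1 ≤ ξ → V ξ ≤ 40 / Real.sqrt δ * ξ) :
    ∫ ξ in Ioi (0:ℝ), V ξ * (|h ξ| * ww i δ ξ) ≤
      40 / Real.sqrt δ * ((∫ ξ in (0:ℝ)..1, |h ξ| * ww i δ ξ) +
        (1 + 2560 * Real.exp 40) * KK 28 β * (μ * ww i δ 1)) := by
  set L := 40 / Real.sqrt δ with hL
  have hL0 : 0 ≤ L := by positivity
  set C := 1 + 2560 * Real.exp 40 with hC
  have hia := hw_int (i := i) hδ hδ1 (measurable_abs.comp hh) (Mh := Mh)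
    (fun z hz => by simpa using hb z hz)
  rw [intervalIntegrable_iff_integrableOn_Ioc_of_le zero_le_one] at hia
  simp only [Function.comp] at hia
  have hi1 : Integrable ((Ioc (0:ℝ) 1).indicator fun ξ => L * (|h ξ| * ww i δ ξ)) :=
    (integrable_indicator_iff measurableSet_Ioc).2 (hia.const_mul L)
  have hi2 : Integrable ((Ioi (1:ℝ)).indicator fun ξ =>
      L * (C * (μ * ww i δ 1)) * (ξ ^ 28 * Real.exp (-(β * ξ)))) :=
    (integrable_indicator_iff measurableSet_Ioi).2 ((KK_int 28 hβ).const_mul _)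
  have hle : ∫ ξ in Ioi (0:ℝ), V ξ * (|h ξ| * ww i δ ξ) ≤
      ∫ ξ in Ioi (0:ℝ), (((Ioc (0:ℝ) 1).indicator fun ξ => L * (|h ξ| * ww i δ ξ)) ξ +
        ((Ioi (1:ℝ)).indicator fun ξ =>
          L * (C * (μ * ww i δ 1)) * (ξ ^ 28 * Real.exp (-(β * ξ)))) ξ) := by
    refine integral_mono_of_nonneg ?_ (hi1.add hi2).integrableOn ?_
    · filter_upwards [ae_restrict_mem measurableSet_Ioi] with ξ hξ
      have h0 : 0 ≤ ξ := le_of_lt hξ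
      exact mul_nonneg (hV0 ξ h0) (mul_nonneg (abs_nonneg _) (ww_nonneg hδ hδ1 i h0))
    · filter_upwards [ae_restrict_mem measurableSet_Ioi] with ξ hξ
      have h0 : 0 < ξ := hξ
      have hw := ww_nonneg hδ hδ1 i h0.le
      rcases le_or_gt ξ 1 with h1 | h1
      · rw [indicator_of_mem (show ξ ∈ Ioc (0:ℝ) 1 from ⟨h0, h1⟩),
          indicator_of_notMem (show ξ ∉ Ioi (1:ℝ) from not_lt.2 h1), add_zero]
        exact mul_le_mul_of_nonneg_right (hV1 ξ h1) (by positivity)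
      · rw [indicator_of_notMem (fun h' : ξ ∈ Ioc (0:ℝ) 1 => absurd h'.2 (not_le.2 h1)),
          indicator_of_mem (show ξ ∈ Ioi (1:ℝ) from h1), zero_add]
        have h2 := hV ξ h1.le
        have h3 := ht ξ h1.le
        have h4 := ww_tail hδ hδ1 i h1.le
        have h5 := (abs_nonneg _).trans h3
        calc V ξ * (|h ξ| * ww i δ ξ)
            ≤ (L * ξ) * ((μ * Real.exp (-(β * ξ))) * (C * ww i δ 1 * ξ ^ 27)) := by gcongr
          _ = _ := by ring
  refine hle.trans_eq ?_
  rw [integral_add hi1.integrableOn hi2.integrableOn, setIntegral_indicator measurableSet_Ioc,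
    setIntegral_indicator measurableSet_Ioi, integral_const_mul, integral_const_mul,
    inter_eq_right.2 (Ioc_subset_Ioi_self), inter_eq_right.2 (Ioi_subset_Ioi zero_le_one),
    intervalIntegral.integral_of_le zero_le_one, KK]
  ring

end estimates

/-! ### The derivatives in the two parameters -/

/-- Both parameter derivatives, `deriv_double` being applied with `(V, W) = (SS, TT)` and
`(TT, SS)`. -/
lemma G_derivs {β μ δ ε εt Mh : ℝ} {h : ℝ → ℝ} (i : ℕ) (hβ : 0 < β) (hδ : 0 < δ) (hδ1 : δ ≤ 1)
    (hε : 0 < ε) (hεt : 0 < εt) (hh : Measurable h)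
    (hb : ∀ z ∈ Icc (0:ℝ) 1, |h z| ≤ Mh)
    (ht : ∀ z, 1 ≤ z → |h z| ≤ μ * Real.exp (-(β * z))) :
    ∃ d₁ d₂ : ℝ, HasDerivAt (fun ε' => Gfull i δ ε' εt h) d₁ ε ∧
      HasDerivAt (fun εt' => Gfull i δ ε εt' h) d₂ εt ∧
      ∀ d ∈ ({d₁, d₂} : Set ℝ), |d| ≤
        40 / Real.sqrt δ * ((∫ ξ in (0:ℝ)..1, |h ξ| * ww i δ ξ) +
          (1 + 2560 * Real.exp 40) * KK 28 β * (μ * ww i δ 1)) := by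
  have hg : Continuous fun z => gamF i z * AA δ z := (gamF_cont i).mul (AA_cont hδ hδ1)
  have hg0 : ∀ z, 0 ≤ z → 0 ≤ gamF i z * AA δ z := fun z hz =>
    mul_nonneg (gamF_nonneg i hz) (AA_pos hδ hδ1 z).le
  have hgC : ∀ z, 0 ≤ z → gamF i z * AA δ z ≤ 10 / δ + 25 := by
    intro z hz
    have hA := (AA_pos hδ hδ1 z).le
    have h1 := mul_le_mul_of_nonneg_right (gamF_le_max i z) hA
    have h2 : 0 ≤ 10 / δ := by positivity
    rcases le_total z 1 with h3 | h3
    · rw [max_eq_right h3, one_mul] at h1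
      have h4 : 10 / ((z - 1/2) ^ 2 + δ) ≤ 10 / δ := by
        gcongr; linarith [sq_nonneg (z - 1/2)]
      linarith [AA_le_unit hδ hδ1 hz h3]
    · rw [max_eq_left h3] at h1
      have h4 : z * AA δ z ≤ z * (25 / z) := by
        gcongr; exact AA_le_tail hδ h3
      have h5 : z * (25 / z) = 25 := by field_simp
      linarith
  have hSc := SS_cont hδ hδ1
  have hTc := TT_cont hδ hδ1
  have hS0 : ∀ z, 0 ≤ z → 0 ≤ SS δ z := fun z hz => SS_nonneg hδ hδ1 hz
  have hT0 : ∀ z, 0 ≤ z → 0 ≤ TT δ z := fun z hz => TT_nonneg hδ hδ1 hz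
  have hSm : Monotone (SS δ) := SS_mono hδ hδ1
  have hTm : Monotone (TT δ) := TT_mono hδ hδ1
  obtain ⟨gS1, gS2⟩ := growth hδ hδ1 hSm le_rfl fun ξ hξ => SS_tail hδ hδ1 hξ
  obtain ⟨gT1, gT2⟩ := growth hδ hδ1 hTm (TT_one hδ hδ1) fun ξ hξ => TT_tail hδ hδ1 hξ
  obtain ⟨d₁, hd₁, hd₁'⟩ := deriv_double (q := εt) (p := ε) hh hg hg0 hgC hSc hSc hTc hS0 hS0
    hSm hTm hεt.le hε (hint_of hβ hδ hδ1 hh hb ht hSc hSm hS0 gS2)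
  obtain ⟨d₂, hd₂, hd₂'⟩ := deriv_double (q := ε) (p := εt) hh hg hg0 hgC hSc hTc hSc hS0 hT0
    hTm hSm hε.le hεt (hint_of hβ hδ hδ1 hh hb ht hTc hTm hT0 gT2)
  refine ⟨d₁, d₂, ?_, ?_, ?_⟩
  · simp only [Gfull_eq i h hδ hδ1]; exact hd₁
  · simp only [Gfull_eq i h hδ hδ1]
    simp only [sub_right_comm _ (ε * _)] at hd₂
    exact hd₂
  · rintro d (rfl | rfl)
    · exact hd₁'.trans (deriv_bound (i := i) hβ hδ hδ1 hh hb ht hS0 gS1 gS2)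
    · exact hd₂'.trans (deriv_bound (i := i) hβ hδ hδ1 hh hb ht hT0 gT1 gT2)

/-- smallness of the parameter derivatives of G_i. -/
theorem stmt17 (β₁ β₂ : ℝ) (hβ₁ : 0 < β₁) (hβ₂ : 1 < β₂) :
    ∀ η : ℝ, 0 < η → ∃ δ₀ σ μ : ℝ, 0 < δ₀ ∧ 0 < σ ∧ 0 < μ ∧
      ∀ δ ∈ Ioc (0:ℝ) δ₀,
        ∀ ε ∈ Ioc (0:ℝ) (σ * Real.sqrt δ), ∀ εt ∈ Ioc (0:ℝ) (σ * Real.sqrt δ),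
          ∀ h : ℝ → ℝ, memZ β₁ β₂ h →
            normZ β₁ β₂ (fun z => h z - conv PhiLSW PhiLSW z) ≤ μ →
            ∀ i ∈ ({1, 2} : Set ℕ), ∃ d₁ d₂ : ℝ,
              HasDerivAt (fun ε' => Gfull i δ ε' εt h) d₁ ε ∧
              HasDerivAt (fun εt' => Gfull i δ ε εt' h) d₂ εt ∧
              ε * |d₁| ≤ η * Ghat i δ h ∧ εt * |d₂| ≤ η * Ghat i δ h := by
  intro η hη
  obtain ⟨c, hc, hcl⟩ := conv_lower
  set C := 2 * Real.exp 40 * (1 + 2560 * Real.exp 40) with hC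
  set E := (1 + 2560 * Real.exp 40) * KK 28 β₁ with hE
  have hC0 : 0 < C := by positivity
  have hE0 : 0 ≤ E := mul_nonneg (by positivity) (KK_nonneg _ _)
  -- `μ` is half the constant of `Ghat_lower`, so that `Ĝ` dominates `μ` times the weight at `1`.
  refine ⟨1, η / (40 * (3 + E)), c / (32 * C), one_pos, by positivity, by positivity, ?_⟩
  intro δ hδ ε hε εt hεt h hmem hn i _
  obtain ⟨hδ, hδ1⟩ := hδ
  set μ := c / (32 * C) with hμ
  have hμ0 : 0 < μ := by positivity
  obtain ⟨hb1, ht⟩ := ball_bounds (zero_le_one.trans hβ₂.le) hmem hn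
  obtain ⟨hh, ⟨Mh, hMh⟩, -⟩ := hmem
  have hb : ∀ z ∈ Icc (0:ℝ) 1, |h z| ≤ Mh := fun z hz => hMh ⟨z, hz, rfl⟩
  have hlow : ∀ z ∈ Icc (0:ℝ) 1, 0 ≤ h z + μ := fun z hz => by
    linarith [(abs_le.1 (hb1 z hz)).1, conv_nonneg hz.1]
  have hJ : ∀ z ∈ Icc (3/4:ℝ) (13/16), c ≤ h z + μ := fun z hz => by
    linarith [(abs_le.1 (hb1 z ⟨by linarith [hz.1], by linarith [hz.2]⟩)).1, hcl z hz]
  have hw := ww_one_pos hδ hδ1 i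
  have hG : μ * ww i δ 1 ≤ Ghat i δ h := by
    have h1 := Ghat_lower (i := i) hδ hδ1 hh hb hc hμ0.le hlow hJ
    have h2 : c / (16 * C) = 2 * μ := by rw [hμ]; field_simp; norm_num
    rw [← hC, h2] at h1
    linarith
  have hG0 : 0 ≤ Ghat i δ h := le_trans (by positivity) hG
  have hI := abs_int_le (i := i) hδ hδ1 hh hb hμ0.le hlow
  have hs : 0 < Real.sqrt δ := Real.sqrt_pos.2 hδ
  obtain ⟨d₁, d₂, hd₁, hd₂, hd⟩ := G_derivs i hβ₁ hδ hδ1 hε.1 hεt.1 hh hb ht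
  have hd' : ∀ d ∈ ({d₁, d₂} : Set ℝ), ∀ e ∈ Ioc (0:ℝ) (η / (40 * (3 + E)) * Real.sqrt δ),
      e * |d| ≤ η * Ghat i δ h := by
    intro d hdm e he
    have h1 : |d| ≤ 40 / Real.sqrt δ * ((3 + E) * Ghat i δ h) := by
      refine (hd d hdm).trans (mul_le_mul_of_nonneg_left ?_ (by positivity))
      have h2 := mul_le_mul_of_nonneg_left hG hE0
      rw [← hE]
      linarith
    calc e * |d| ≤ (η / (40 * (3 + E)) * Real.sqrt δ) *
          (40 / Real.sqrt δ * ((3 + E) * Ghat i δ h)) :=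
          mul_le_mul he.2 h1 (abs_nonneg _) (by positivity)
      _ = η * Ghat i δ h := by field_simp
  exact ⟨d₁, d₂, hd₁, hd₂, hd' d₁ (by simp) ε hε, hd' d₂ (by simp) εt hεt⟩
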